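/- arXiv:1501.07316 — 11 statements merged into one kernel-verified Lean document; each statement's English description precedes it below -/
import Mathlib

section
/- Let O be a linearly ordered type, C a type, and F : O → O → C a function such that for every a ∈ O the map b ↦ F a b is injective on {b : b ≤ a}, and for every b ∈ O the map a ↦ F a b is injective on {a : a ≤ b}. Then F satisfies (*) (no monochromatic K_{2,2}). -/
universe u v

/-- `F` has no monochromatic `K_{2,2}`. -/
def NoMonoK22 {A B C : Type*} (F : A → B → C) : Prop :=
  ¬ ∃ (a₁ a₂ : A) (b₁ b₂ : B), a₁ ≠ a₂ ∧ b₁ ≠ b₂ ∧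
      F a₁ b₁ = F a₁ b₂ ∧ F a₁ b₁ = F a₂ b₁ ∧ F a₁ b₁ = F a₂ b₂

/-- A Ferrers relation: the sets `{b | r a b}` form a chain under inclusion; equivalently, the
bipartite graph of `r` has no induced matching of size two, the form used here. It abstracts
the comparison `b ≤ a` to a grid whose rows and columns are indexed by different types. -/
def IsFerrers {A B : Type*} (r : A → B → Prop) : Prop :=
  ∀ ⦃a₁ a₂ b₁ b₂⦄, r a₁ b₁ → r a₂ b₂ → r a₁ b₂ ∨ r a₂ b₁

theorem isFerrers_of_isTrans_of_total {A : Type*} (r : A → A → Prop) [IsTrans A r] [Std.Total r] :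
    IsFerrers r := fun a₁ a₂ _ _ h₁ h₂ =>
  (total_of r a₁ a₂).imp (fun h => trans_of r h h₂) (fun h => trans_of r h h₁)

-- Otherwise `r` would hold on one diagonal of the `2 × 2` grid and fail on the other.
theorem IsFerrers.row_or_compl_column {A B : Type*} {r : A → B → Prop} (hr : IsFerrers r)
    (a₁ a₂ : A) (b₁ b₂ : B) :
    (r a₁ b₁ ∧ r a₁ b₂) ∨ (r a₂ b₁ ∧ r a₂ b₂) ∨
      (¬ r a₁ b₁ ∧ ¬ r a₂ b₁) ∨ (¬ r a₁ b₂ ∧ ¬ r a₂ b₂) := by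
  have main_diagonal : r a₁ b₁ → r a₂ b₂ → r a₁ b₂ ∨ r a₂ b₁ := fun h h' => hr h h'
  have anti_diagonal : r a₁ b₂ → r a₂ b₁ → r a₁ b₁ ∨ r a₂ b₂ := fun h h' => hr h h'
  tauto

theorem stmt1_general {A B C : Type*} (F : A → B → C) {r : A → B → Prop} (hr : IsFerrers r)
    (hrow : ∀ a, Set.InjOn (fun b => F a b) {b | r a b})
    (hcol : ∀ b, Set.InjOn (fun a => F a b) {a | ¬ r a b}) :
    NoMonoK22 F := by
  rintro ⟨a₁, a₂, b₁, b₂, ha, hb, h₁₂, h₂₁, h₂₂⟩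
  rcases hr.row_or_compl_column a₁ a₂ b₁ b₂ with
    ⟨hr₁, hr₂⟩ | ⟨hr₁, hr₂⟩ | ⟨hr₁, hr₂⟩ | ⟨hr₁, hr₂⟩
  · exact hb (hrow a₁ hr₁ hr₂ h₁₂)
  · exact hb (hrow a₂ hr₁ hr₂ (h₂₁.symm.trans h₂₂))
  · exact ha (hcol b₁ hr₁ hr₂ h₂₁)
  · exact ha (hcol b₂ hr₁ hr₂ (h₁₂.symm.trans h₂₂))

theorem stmt1 {O : Type u} [LinearOrder O] {C : Type v} (F : O → O → C)
    (h₁ : ∀ a : O, Set.InjOn (fun b => F a b) {b : O | b ≤ a})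
    (h₂ : ∀ b : O, Set.InjOn (fun a => F a b) {a : O | a ≤ b}) :
    NoMonoK22 F :=
  stmt1_general F (isFerrers_of_isTrans_of_total (· ≥ ·)) h₁
    fun b => (h₂ b).mono fun _ ha => le_of_not_ge ha
end

section
/- For every infinite cardinal κ, there exists a function F from (ordinals below κ⁺) × (ordinals below κ⁺) to the ordinals below κ such that F α α = 0 for every α, the map β ↦ F α β is injective on {β : β ≤ α} for every α, the map α ↦ F α β is injective on {α : α ≤ β} for every β, and F satisfies (*) (no monochromatic K_{2,2}). -/
universe u

/-!
Every proper initial segment of `κ⁺` has cardinality at most `κ`, so each `{β | β ≤ α}` can be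
enumerated injectively by ordinals below `κ`, with `α` itself sent to `0`. Color a pair by the
enumeration belonging to its larger point, evaluated at its smaller one. In a `2 × 2` grid the
largest of the four coordinates dominates both coordinates of the other side, so the two cells of
its row (or column) have different colors.
-/

section LinearOrder

variable {A C : Type*} [LinearOrder A]

theorem noMonoK22_of_injOn_Iic {F : A → A → C}
    (hrow : ∀ a, Set.InjOn (fun b => F a b) (Set.Iic a))
    (hcol : ∀ b, Set.InjOn (fun a => F a b) (Set.Iic b)) : NoMonoK22 F := by
  rintro ⟨a₁, a₂, b₁, b₂, ha, hb, h₁₂, h₂₁, h₂₂⟩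
  have lt_max_of_row (a : A) (h : F a b₁ = F a b₂) : a < max b₁ b₂ := by
    by_contra! hle
    exact hb (hrow a (le_of_max_le_left hle) (le_of_max_le_right hle) h)
  have lt_max_of_col (b : A) (h : F a₁ b = F a₂ b) : b < max a₁ a₂ := by
    by_contra! hle
    exact ha (hcol b (le_of_max_le_left hle) (le_of_max_le_right hle) h)
  exact lt_asymm
    (max_lt (lt_max_of_row a₁ h₁₂) (lt_max_of_row a₂ (h₂₁.symm.trans h₂₂)))
    (max_lt (lt_max_of_col b₁ h₂₁) (lt_max_of_col b₂ (h₁₂.symm.trans h₂₂)))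

/-- The symmetric coloring of pairs induced by a family of functions `e a` on the initial segments
`Set.Iic a`: the larger point selects the function, which is evaluated at the smaller point. -/
def initialSegmentColoring (e : ∀ a : A, Set.Iic a → C) (a b : A) : C :=
  e (max a b) ⟨min a b, min_le_max⟩

variable {e : ∀ a : A, Set.Iic a → C}

theorem initialSegmentColoring_comm (a b : A) :
    initialSegmentColoring e a b = initialSegmentColoring e b a := by
  unfold initialSegmentColoring
  rw! [max_comm, min_comm]
  rfl

theorem initialSegmentColoring_of_le {a b : A} (h : b ≤ a) :
    initialSegmentColoring e a b = e a ⟨b, h⟩ := by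
  unfold initialSegmentColoring
  rw! [max_eq_left h, min_eq_right h]
  rfl

theorem injOn_initialSegmentColoring_left (he : ∀ a, Function.Injective (e a)) (a : A) :
    Set.InjOn (fun b => initialSegmentColoring e a b) (Set.Iic a) := by
  intro b hb b' hb' h
  simp only [initialSegmentColoring_of_le hb, initialSegmentColoring_of_le hb'] at h
  exact congrArg Subtype.val (he a h)

theorem injOn_initialSegmentColoring_right (he : ∀ a, Function.Injective (e a)) (b : A) :
    Set.InjOn (fun a => initialSegmentColoring e a b) (Set.Iic b) := by
  simpa only [initialSegmentColoring_comm _ b] using injOn_initialSegmentColoring_left he b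

theorem stmt2_general {s : Set C} {c : C} (hc : c ∈ s) (hs : ∀ a : A, Nonempty (Set.Iic a ↪ s)) :
    ∃ F : A → A → C,
      (∀ a b, F a b ∈ s) ∧
      (∀ a, F a a = c) ∧
      (∀ a, Set.InjOn (fun b => F a b) {b | b ≤ a}) ∧
      (∀ b, Set.InjOn (fun a => F a b) {a | a ≤ b}) ∧
      NoMonoK22 F := by
  classical
  let e (a : A) : Set.Iic a ↪ s := (hs a).some.setValue ⟨a, le_rfl⟩ ⟨c, hc⟩
  have he_self (a : A) : (e a ⟨a, le_rfl⟩ : C) = c :=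
    congrArg Subtype.val (Function.Embedding.setValue_eq _ _ _)
  have he_inj (a : A) : Function.Injective fun x => (e a x : C) :=
    Subtype.val_injective.comp (e a).injective
  have hrow := injOn_initialSegmentColoring_left he_inj
  have hcol := injOn_initialSegmentColoring_right he_inj
  exact ⟨initialSegmentColoring fun a x => (e a x : C), fun _ _ => Subtype.coe_prop _,
    fun a => (initialSegmentColoring_of_le le_rfl).trans (he_self a), hrow, hcol,
    noMonoK22_of_injOn_Iic hrow hcol⟩

end LinearOrder

theorem nonempty_Iic_embedding_Iio_ord {κ : Cardinal.{u}} (hκ : Cardinal.aleph0 ≤ κ)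
    (α : {o : Ordinal.{u} // o < (Order.succ κ).ord}) :
    Nonempty (Set.Iic α ↪ Set.Iio κ.ord) := by
  have hα : (α.1 + 1).card ≤ κ := by
    rw [Ordinal.card_add_one]
    exact Cardinal.add_le_of_le hκ (Order.lt_succ_iff.1 (Cardinal.lt_ord.1 α.2))
      (Cardinal.one_le_aleph0.trans hκ)
  have hmk : Cardinal.mk (Set.Iio (α.1 + 1)) ≤ Cardinal.mk (Set.Iio κ.ord) := by
    simpa only [Cardinal.mk_Iio_ordinal, Cardinal.card_ord, Cardinal.lift_le] using hα
  obtain ⟨f⟩ := hmk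
  have hlt (β : {o : Ordinal.{u} // o < (Order.succ κ).ord}) (hβ : β ≤ α) : β.1 < α.1 + 1 :=
    Order.lt_add_one_iff.2 hβ
  exact ⟨((Function.Embedding.subtype _).subtypeMap hlt).trans f⟩

theorem stmt2 (κ : Cardinal.{u}) (hκ : Cardinal.aleph0 ≤ κ) :
    ∃ F : {o : Ordinal.{u} // o < (Order.succ κ).ord} →
          {o : Ordinal.{u} // o < (Order.succ κ).ord} → Ordinal.{u},
      (∀ α β, F α β < κ.ord) ∧
      (∀ α, F α α = 0) ∧
      (∀ α, Set.InjOn (fun β => F α β) {β | β ≤ α}) ∧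
      (∀ β, Set.InjOn (fun α => F α β) {α | α ≤ β}) ∧
      NoMonoK22 F :=
  stmt2_general (Cardinal.ord_pos.2 (Cardinal.aleph0_pos.trans_le hκ))
    (nonempty_Iic_embedding_Iio_ord hκ)
end

section
/- For every infinite cardinal κ, there exist types A, B, C with #A = #B = κ⁺ and #C = κ and a function F : A → B → C that satisfies (*) (no monochromatic K_{2,2}) and is C-maximal (both A-inextensible and B-inextensible). -/
/-!
Well-order `I`, where `#I = κ⁺`, in type `κ⁺`, so that every initial segment of `I` injects into
the set `C` of `κ` colours. A symmetric colouring `F` of `I × I` is built by recursion on `β`, one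
row `F β u`, `u ≤ β`, at a time. A row that is injective on `u ≤ β` closes no monochromatic
`K_{2,2}`. Identifying two entries `x, y < β` of such a row and giving them the colour `c` is also
harmless, unless `x` and `y` have a common neighbour below `β` in colour `c` already; either way
they have one from stage `β` on. If every triple `(x, y, c)` is considered at unboundedly many
stages, then in the end any `x` and `y` have a common neighbour in every colour. A new vertex has
`κ⁺` edges in only `κ` colours, so two of them, to `x` and `y` say, share a colour `c`, and a common
neighbour of `x` and `y` in colour `c` completes a monochromatic `K_{2,2}`.
-/

universe u

/-- Adjoining any new vertex to `B` would create a monochromatic `K_{2,2}`. -/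
def BInextensible {A B C : Type*} (F : A → B → C) : Prop :=
  ∀ g : A → C, ∃ a₁ a₂ : A, a₁ ≠ a₂ ∧ ∃ b : B,
    F a₁ b = F a₂ b ∧ F a₂ b = g a₁ ∧ g a₁ = g a₂

/-- Adjoining any new vertex to `A` would create a monochromatic `K_{2,2}`. -/
def AInextensible {A B C : Type*} (F : A → B → C) : Prop :=
  ∀ h : B → C, ∃ b₁ b₂ : B, b₁ ≠ b₂ ∧ ∃ a : A,
    F a b₁ = F a b₂ ∧ F a b₂ = h b₁ ∧ h b₁ = h b₂

open Cardinal Order Set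

/-- Every two vertices of `B`, equal or not, have a common neighbour in every colour. When there are
fewer colours than vertices in `B`, this forces `A`-inextensibility. -/
def PairSaturated {A B C : Type*} (F : A → B → C) : Prop :=
  ∀ b₁ b₂ c, ∃ a, F a b₁ = c ∧ F a b₂ = c

theorem PairSaturated.aInextensible {A : Type*} {B C : Type u} {F : A → B → C}
    (hF : PairSaturated F) (hCB : #C < #B) : AInextensible F := by
  intro h
  have h_not_inj : ¬ Function.Injective h := fun h_inj ↦ (mk_le_of_injective h_inj).not_gt hCB
  obtain ⟨b₁, b₂, h_eq, hb⟩ := Function.not_injective_iff.1 h_not_inj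
  obtain ⟨a, ha₁, ha₂⟩ := hF b₁ b₂ (h b₁)
  exact ⟨b₁, b₂, hb, a, ha₁.trans ha₂.symm, ha₂, h_eq⟩

theorem bInextensible_iff_aInextensible_flip {A B C : Type*} {F : A → B → C} :
    BInextensible F ↔ AInextensible (flip F) :=
  Iff.rfl

section Symmetrize

variable {I C : Type*} [LinearOrder I] {R R' : I → I → C} {i j k : I}

/-- The symmetric colouring of `I × I` given by the entries `R i j`, `j ≤ i`, of a lower
triangular array. The entries of `R` above the diagonal are ignored. -/
def symmetrize (R : I → I → C) (i j : I) : C :=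
  R (max i j) (min i j)

theorem symmetrize_comm (R : I → I → C) (i j : I) : symmetrize R i j = symmetrize R j i := by
  rw [symmetrize, symmetrize, max_comm, min_comm]

theorem symmetrize_of_le (h : j ≤ i) : symmetrize R i j = R i j := by
  rw [symmetrize, max_eq_left h, min_eq_right h]

theorem symmetrize_congr (h : EqOn R R' (Iio k)) (hi : i < k) (hj : j < k) :
    symmetrize R i j = symmetrize R' i j :=
  congrFun (h (max_lt hi hj)) _

end Symmetrize

section Rows

variable {I C : Type*} [LinearOrder I] {F : I → I → C} {β x y : I} {c : C}

/-- The vertices `x` and `y` have a common neighbour in colour `c` among the vertices below `β`. -/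
def JoinedBelow (F : I → I → C) (β : I) (c : C) (x y : I) : Prop :=
  ∃ γ < β, F γ x = c ∧ F γ y = c

theorem JoinedBelow.symm (h : JoinedBelow F β c x y) : JoinedBelow F β c y x :=
  h.imp fun _ hγ ↦ ⟨hγ.1, hγ.2.symm⟩

theorem joinedBelow_symmetrize_congr {R R' : I → I → C} (h : EqOn R R' (Iio β)) (hx : x < β)
    (hy : y < β) : JoinedBelow (symmetrize R) β c x y ↔ JoinedBelow (symmetrize R') β c x y :=
  exists_congr fun _ ↦ and_congr_right fun hγ ↦ by
    rw [symmetrize_congr h hγ hx, symmetrize_congr h hγ hy]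

/-- The row `s` can be added at `β` to a symmetric colouring `F` of the vertices below `β` without
closing a monochromatic `K_{2,2}`. The diagonal entry `s β` has to differ from all the others,
because the common neighbours of `β` and a vertex `u < β` would depend on the row `s` itself. -/
def IsFreshRow (F : I → I → C) (β : I) (s : I → C) : Prop :=
  ∀ ⦃u v⦄, u ≤ β → v ≤ β → u ≠ v → s u = s v → u < β ∧ v < β ∧ ¬ JoinedBelow F β (s u) u v

theorem isFreshRow_symmetrize_congr {R R' : I → I → C} (h : EqOn R R' (Iio β)) {s : I → C} :
    IsFreshRow (symmetrize R) β s ↔ IsFreshRow (symmetrize R') β s := by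
  refine forall₂_congr fun u v ↦ forall₄_congr fun _ _ _ _ ↦
    and_congr_right fun hu ↦ and_congr_right fun hv ↦ ?_
  rw [joinedBelow_symmetrize_congr h hu hv]

theorem isFreshRow_of_injOn {s : I → C} (hs : InjOn s (Iic β)) : IsFreshRow F β s :=
  fun _ _ hu hv huv h ↦ absurd (hs hu hv h) huv

theorem exists_isFreshRow_of_not_joinedBelow (hβ : ∃ f : I → C, InjOn f (Iic β)) (hx : x < β)
    (hy : y < β) (hc : ¬ JoinedBelow F β c x y) :
    ∃ s, IsFreshRow F β s ∧ s x = c ∧ s y = c := by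
  classical
  obtain ⟨f, hf⟩ := hβ
  let g : I → C := Equiv.swap (f x) c ∘ f
  have hg : InjOn g (Iic β) := (Equiv.injective _).comp_injOn hf
  have hgx : g x = c := Equiv.swap_apply_left _ _
  let collapse : I → I := Function.update id y x
  have h_collapse_le {u : I} (hu : u ≤ β) : collapse u ≤ β := by
    grind
  have h_pair {u v : I} (huv : u ≠ v) (h : collapse u = collapse v) :
      (u = x ∧ v = y) ∨ (u = y ∧ v = x) := by
    grind
  have hsx : g (collapse x) = c := by grind
  have hsy : g (collapse y) = c := by grind
  refine ⟨g ∘ collapse, fun u v hu hv huv h ↦ ?_, hsx, hsy⟩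
  obtain ⟨rfl, rfl⟩ | ⟨rfl, rfl⟩ := h_pair huv (hg (h_collapse_le hu) (h_collapse_le hv) h)
  · exact ⟨hx, hy, fun h_joined ↦ hc (hsx ▸ h_joined)⟩
  · exact ⟨hy, hx, fun h_joined ↦ hc (hsy ▸ h_joined.symm)⟩

/-- The row `s` can be added at `β`, and after that `x` and `y`, if both are below `β`, have a
common neighbour in colour `c`: either `β` itself or one that they already had. -/
def IsJoiningRow (F : I → I → C) (β x y : I) (c : C) (s : I → C) : Prop :=
  IsFreshRow F β s ∧ (x < β → y < β → JoinedBelow F β c x y ∨ s x = c ∧ s y = c)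

theorem isJoiningRow_symmetrize_congr {R R' : I → I → C} (h : EqOn R R' (Iio β)) {s : I → C} :
    IsJoiningRow (symmetrize R) β x y c s ↔ IsJoiningRow (symmetrize R') β x y c s :=
  and_congr (isFreshRow_symmetrize_congr h) <|
    forall₂_congr fun hx hy ↦ or_congr_left (joinedBelow_symmetrize_congr h hx hy)

theorem exists_isJoiningRow (F : I → I → C) (hβ : ∃ f : I → C, InjOn f (Iic β)) (x y : I) (c : C) :
    ∃ s, IsJoiningRow F β x y c s := by
  by_cases h : x < β ∧ y < β ∧ ¬ JoinedBelow F β c x y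
  · obtain ⟨hx, hy, hc⟩ := h
    obtain ⟨s, hs, hsxy⟩ := exists_isFreshRow_of_not_joinedBelow hβ hx hy hc
    exact ⟨s, hs, fun _ _ ↦ Or.inr hsxy⟩
  · obtain ⟨f, hf⟩ := hβ
    exact ⟨f, isFreshRow_of_injOn hf, fun hx hy ↦ Or.inl (by tauto)⟩

theorem pairSaturated_symmetrize {R : I → I → C}
    (hR : ∀ x y c, ∃ β, x < β ∧ y < β ∧ IsJoiningRow (symmetrize R) β x y c (R β)) :
    PairSaturated (symmetrize R) := by
  intro x y c
  obtain ⟨β, hx, hy, -, h_joined⟩ := hR x y c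
  obtain ⟨γ, -, hγ⟩ | hβ := h_joined hx hy
  · exact ⟨γ, hγ⟩
  · exact ⟨β, by rwa [symmetrize_of_le hx.le, symmetrize_of_le hy.le]⟩

theorem noMonoK22_symmetrize {R : I → I → C} (hR : ∀ β, IsFreshRow (symmetrize R) β (R β)) :
    NoMonoK22 (symmetrize R) := by
  rintro ⟨a, a', b, b', ha, hb, h₁, h₂, h₃⟩
  wlog haa : a' ≤ a generalizing a a'
  · exact this a' a ha.symm (by grind) (by grind) (by grind) (le_of_not_ge haa)
  wlog hbb : b' ≤ b generalizing b b'
  · exact this b' b hb.symm (by grind) (by grind) (by grind) (le_of_not_ge hbb)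
  wlog hba : b ≤ a generalizing a a' b b'
  · simp only [symmetrize_comm R a, symmetrize_comm R a'] at h₁ h₂ h₃
    exact this b b' hb hbb a a' ha h₂ h₁ h₃ haa (le_of_not_ge hba)
  have hb'a : b' ≤ a := hbb.trans hba
  rw [symmetrize_of_le hba] at h₁ h₂ h₃
  rw [symmetrize_of_le hb'a] at h₁
  exact (hR a hba hb'a hb h₁).2.2 ⟨a', haa.lt_of_ne ha.symm, h₂.symm, h₃.symm⟩

end Rows

theorem exists_forall_of_wellFoundedLT {I X : Type*} [LT I] [WellFoundedLT I] [Nonempty X]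
    {P : I → (I → X) → X → Prop}
    (h_congr : ∀ i f g x, (∀ j < i, f j = g j) → (P i f x ↔ P i g x))
    (h_exists : ∀ i f, ∃ x, P i f x) : ∃ f : I → X, ∀ i, P i f (f i) := by
  classical
  choose step h_step using h_exists
  let extend (i : I) (f : ∀ j < i, X) (j : I) : X :=
    if h : j < i then f j h else Classical.arbitrary X
  let f : I → X := WellFoundedLT.fix fun i f ↦ step i (extend i f)
  have hf (i : I) : f i = step i (extend i fun j _ ↦ f j) := WellFoundedLT.fix_eq _ i
  refine ⟨f, fun i ↦ ?_⟩
  have h_extend : ∀ j < i, extend i (fun j _ ↦ f j) j = f j := fun j hj ↦ dif_pos hj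
  rw [← h_congr i _ f _ h_extend, hf i]
  exact h_step i _

theorem exists_symm_pairSaturated_of_task {I C : Type*} [LinearOrder I] [WellFoundedLT I]
    (h_inj : ∀ β : I, ∃ f : I → C, InjOn f (Iic β)) {task : I → I × I × C}
    (h_task : ∀ t, ¬ BddAbove (task ⁻¹' {t})) :
    ∃ F : I → I → C, flip F = F ∧ NoMonoK22 F ∧ PairSaturated F := by
  have : Nonempty (I → C) := ⟨fun β ↦ (h_inj β).choose β⟩
  obtain ⟨R, hR⟩ := exists_forall_of_wellFoundedLT
    (P := fun β R ↦ IsJoiningRow (symmetrize R) β (task β).1 (task β).2.1 (task β).2.2)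
    (fun _ _ _ _ h ↦ isJoiningRow_symmetrize_congr h)
    (fun β R ↦ exists_isJoiningRow (symmetrize R) (h_inj β) _ _ _)
  refine ⟨symmetrize R, funext₂ fun i j ↦ symmetrize_comm R j i,
    noMonoK22_symmetrize fun β ↦ (hR β).1, pairSaturated_symmetrize fun x y c ↦ ?_⟩
  obtain ⟨β, hβ : task β = (x, y, c), hxyβ⟩ := not_bddAbove_iff.1 (h_task (x, y, c)) (max x y)
  obtain ⟨hx, hy⟩ := max_lt_iff.1 hxyβ
  exact ⟨β, hx, hy, by simpa only [hβ] using hR β⟩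

theorem exists_forall_not_bddAbove_preimage_singleton {I T : Type u} [Preorder I] [Infinite I]
    [Nonempty T] (h_Iic : ∀ i : I, #(Iic i) < #I) (hT : #T ≤ #I) :
    ∃ e : I → T, ∀ t, ¬ BddAbove (e ⁻¹' {t}) := by
  have h_mk : #I = #(T × I) := by
    rw [← mul_def, mul_eq_right (aleph0_le_mk I) hT (mk_ne_zero T)]
  obtain ⟨φ⟩ := Cardinal.eq.1 h_mk
  refine ⟨fun i ↦ (φ i).1, fun t ⟨i, hi⟩ ↦ (h_Iic i).not_ge ?_⟩
  have h_inj : Function.Injective fun j ↦ φ.symm (t, j) :=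
    φ.symm.injective.comp (Prod.mk_right_injective t)
  have h_range : range (fun j ↦ φ.symm (t, j)) ⊆ Iic i :=
    range_subset_iff.2 fun j ↦ hi (by simp)
  rw [← mk_range_eq _ h_inj]
  exact mk_le_mk_of_subset h_range

theorem exists_symm_pairSaturated {I C : Type u} [Infinite C] (hCI : #C ≤ #I)
    (hIC : #I ≤ succ #C) :
    ∃ F : I → I → C, flip F = F ∧ NoMonoK22 F ∧ PairSaturated F := by
  have hC : ℵ₀ ≤ #C := aleph0_le_mk C
  have : Infinite I := infinite_iff.2 (hC.trans hCI)
  have hI : ℵ₀ ≤ #I := aleph0_le_mk I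
  obtain ⟨_, _, h_ord⟩ := exists_ord_eq_type_lt I
  have h_Iic (β : I) : #(Iic β) < #I := mk_Iic_lt β h_ord hI
  have h_inj (β : I) : ∃ f : I → C, InjOn f (Iic β) := by
    obtain ⟨f⟩ : #(Iic β) ≤ #C := lt_succ_iff.1 ((h_Iic β).trans_le hIC)
    exact exists_injOn_iff_injective.2 ⟨f, f.injective⟩
  have h_mk_task : #(I × I × C) ≤ #I := by
    simp only [mk_prod, lift_id, mul_eq_left hI hCI (mk_ne_zero C), mul_eq_self hI, le_rfl]
  obtain ⟨task, h_task⟩ := exists_forall_not_bddAbove_preimage_singleton h_Iic h_mk_task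
  exact exists_symm_pairSaturated_of_task h_inj h_task

theorem stmt3 (κ : Cardinal.{u}) (hκ : Cardinal.aleph0 ≤ κ) :
    ∃ (A B C : Type u) (F : A → B → C),
      Cardinal.mk A = Order.succ κ ∧ Cardinal.mk B = Order.succ κ ∧
      Cardinal.mk C = κ ∧
      NoMonoK22 F ∧ AInextensible F ∧ BInextensible F := by
  induction κ using Cardinal.inductionOn with
  | _ C =>
    have : Infinite C := infinite_iff.2 hκ
    obtain ⟨I, hI⟩ : ∃ I : Type u, #I = succ #C := ⟨_, mk_out _⟩
    obtain ⟨F, hF_symm, hF_mono, hF_sat⟩ :=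
      exists_symm_pairSaturated (hI ▸ le_succ #C) hI.le
    have hF_ext : AInextensible F := hF_sat.aInextensible (hI ▸ lt_succ #C)
    refine ⟨I, I, C, F, hI, hI, rfl, hF_mono, hF_ext, ?_⟩
    rwa [bInextensible_iff_aInextensible_flip, hF_symm]
end

section
/- Let κ be an infinite cardinal, let O be the ordinals below κ⁺, let C be a type, and let F : O → O → C be a function satisfying (*) (no monochromatic K_{2,2}) such that for every ordinal α with κ ≤ α < κ⁺ and every c ∈ C there exists β < α with F α β = c. Then F is B-inextensible: for every g : O → C there exist α₁ ≠ α₂ in O and β ∈ O with F α₁ β = F α₂ β = g α₁ = g α₂. -/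
universe u v

/-!
Let `A` be a regular uncountable well-order in which every row `F a`, for `a` in a stationary set,
attains every color strictly below `a`. Given `g`, choose `f a < a` with `F a (f a) = g a`. By
Fodor's lemma `f` has a constant value `b` on a stationary set. A single row shows that there are
fewer colors than the cofinality of `A`, so `g` is constant on a smaller stationary set. Any two
points of the latter, together with `b`, are as required.
-/

open Cardinal Order Set

section Fodor

theorem isLUB_range_nat_add {β : Type*} [Preorder β] {d : ℕ → β} {x : β} (hd : Monotone d)
    (hx : IsLUB (range d) x) (n : ℕ) : IsLUB (range fun m ↦ d (m + n)) x := by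
  refine ⟨?_, fun b hb ↦ hx.2 ?_⟩ <;> rintro _ ⟨m, rfl⟩
  · exact hx.1 ⟨m + n, rfl⟩
  · exact (hd (Nat.le_add_right m n)).trans (hb ⟨m, rfl⟩)

variable {α : Type*} [LinearOrder α] {S : Set α}

theorem isClub_Ioi [NoMaxOrder α] (a : α) : IsClub (Ioi a) where
  dirSupClosed := (isUpperSet_Ioi a).dirSupClosed
  isCofinal b := by
    obtain ⟨c, hc⟩ := exists_gt (max a b)
    exact ⟨c, (le_max_left a b).trans_lt hc, (le_max_right a b).trans hc.le⟩

theorem isStationary_Ici (a : α) : IsStationary (Ici a) :=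
  .of_not_isCofinal_compl (not_isCofinal_iff.2 ⟨a, fun _ hb ↦ not_le.1 hb⟩)

theorem nontrivial_of_isStationary [NoMaxOrder α] (hS : IsStationary S) : S.Nontrivial := by
  obtain ⟨a, ha⟩ := hS.nonempty
  obtain ⟨b, hb, hab⟩ := hS (isClub_Ioi a)
  exact ⟨a, ha, b, hb, hab.ne⟩

/-- The diagonal intersection of a family of subsets of `α` indexed by `α` itself, used in the
proof of Fodor's lemma: only the sets whose index is strictly below `x` constrain `x`. -/
def diagInter (s : α → Set α) : Set α :=
  {x | ∀ i < x, x ∈ s i}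

theorem dirSupClosed_diagInter {s : α → Set α} (hs : ∀ i, DirSupClosed (s i)) :
    DirSupClosed (diagInter s) := by
  intro t ht _ _ x hx i hix
  obtain ⟨y, hyt, hiy⟩ := (lt_isLUB_iff hx).1 hix
  have htail : t ∩ Ici y ⊆ s i := fun z hz ↦ ht hz.1 i (hiy.trans_le hz.2)
  exact hs i htail ⟨y, hyt, le_rfl⟩ (Std.Total.directedOn _) (hx.inter_Ici_of_mem hyt)

variable [WellFoundedLT α]

theorem exists_isStationary_fiber {C : Type v} (hα : cof α ≠ ℵ₀)
    (hC : lift #C < lift.{v} (cof α)) (hS : IsStationary S) (g : α → C) :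
    ∃ c, IsStationary {x ∈ S | g x = c} := by
  have hunion : S = ⋃ c, {x ∈ S | g x = c} := by
    ext x
    simp only [mem_iUnion, mem_ofPred_eq, exists_and_left, exists_eq', and_true]
  rwa [hunion, isStationary_iUnion_iff hα hC] at hS

theorem exists_isLUB_range_nat (hα : ℵ₀ < cof α) (d : ℕ → α) : ∃ x, IsLUB (range d) x := by
  have hbdd : BddAbove (range d) :=
    .of_not_isCofinal fun h ↦ (cof_le h).not_gt <|
      (mk_le_aleph0_iff.2 (countable_range d).to_subtype).trans_lt hα
  obtain ⟨x, hx⟩ := exists_minimal_of_wellFoundedLT (· ∈ upperBounds (range d)) hbdd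
  exact ⟨x, minimal_iff_isLeast.1 hx⟩

variable [IsRegularCardinalOrder α]

theorem mk_Iio_lt_cof (a : α) : #(Iio a) < cof α := by
  rw [cof_eq_cardinalMk]
  exact mk_Iio_lt a ord_cardinalMk

theorem isCofinal_diagInter (hα : ℵ₀ < cof α) {s : α → Set α} (hs : ∀ i, IsClub (s i)) :
    IsCofinal (diagInter s) := by
  intro a
  have hclub (b : α) : IsClub (⋂ i : Iio b, s i) :=
    .iInter hα.ne' (lift_lt.2 (mk_Iio_lt_cof b)) fun i ↦ hs i
  choose next next_mem le_next using fun b ↦ (hclub b).isCofinal b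
  let d : ℕ → α := Nat.rec a fun _ ↦ next
  have hd : Monotone d := monotone_nat_of_le_succ fun n ↦ le_next (d n)
  have hd_mem {i : α} {n : ℕ} (hi : i < d n) : d (n + 1) ∈ s i :=
    mem_iInter.1 (next_mem (d n)) ⟨i, hi⟩
  obtain ⟨x, hx⟩ := exists_isLUB_range_nat hα d
  refine ⟨x, fun i hix ↦ ?_, hx.1 ⟨0, rfl⟩⟩
  obtain ⟨_, ⟨n, rfl⟩, hin⟩ := (lt_isLUB_iff hx).1 hix
  refine (hs i).isLUB_mem ?_ (range_nonempty _) (isLUB_range_nat_add hd hx (n + 1))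
  rintro _ ⟨m, rfl⟩
  exact hd_mem (hin.trans_le (hd (Nat.le_add_left n m)))

theorem isClub_diagInter (hα : ℵ₀ < cof α) {s : α → Set α} (hs : ∀ i, IsClub (s i)) :
    IsClub (diagInter s) :=
  ⟨dirSupClosed_diagInter fun i ↦ (hs i).dirSupClosed, isCofinal_diagInter hα hs⟩

theorem fodor (hα : ℵ₀ < cof α) (hS : IsStationary S) {f : α → α} (hf : ∀ x ∈ S, f x < x) :
    ∃ y, IsStationary {x ∈ S | f x = y} := by
  by_contra! h
  choose t ht hdisj using fun y ↦ not_isStationary_iff.1 (h y)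
  obtain ⟨x, hxS, hx⟩ := hS (isClub_diagInter hα ht)
  exact disjoint_left.1 (hdisj (f x)) ⟨hxS, rfl⟩ (hx (f x) (hf x hxS))

end Fodor

section RegularOrdinal

variable {c : Cardinal.{u}}

theorem cof_Iio_ord (hc : c.IsRegular) : cof (Iio c.ord) = lift.{u + 1} c := by
  rw [Ordinal.cof_Iio, ← Ordinal.lift_cof, hc.cof_ord]

theorem aleph0_lt_cof_Iio_ord (hc : c.IsRegular) (hc₀ : ℵ₀ < c) : ℵ₀ < cof (Iio c.ord) := by
  rwa [cof_Iio_ord hc, aleph0_lt_lift]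

theorem isRegularCardinalOrder_Iio_ord (hc : c.IsRegular) :
    IsRegularCardinalOrder (Iio c.ord) where
  type_lt_le_ord_cof := by
    rw [cof_Iio_ord hc, Ordinal.type_lt_Iio, lift_ord]

end RegularOrdinal

theorem stmt4_general {A : Type u} {C : Type v} [LinearOrder A] [WellFoundedLT A]
    [IsRegularCardinalOrder A] (hA : ℵ₀ < cof A) (F : A → A → C) {S : Set A}
    (hS : IsStationary S) (honto : ∀ a ∈ S, ∀ c, ∃ b < a, F a b = c) :
    BInextensible F := by
  intro g
  obtain ⟨a₀, ha₀⟩ := hS.nonempty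
  have hC : lift.{u} #C < lift.{v} (cof A) := by
    have hsurj : Function.Surjective fun b : Iio a₀ ↦ F a₀ b := fun c ↦
      let ⟨b, hb, hFb⟩ := honto a₀ ha₀ c
      ⟨⟨b, hb⟩, hFb⟩
    exact (lift_mk_le_lift_mk_of_surjective hsurj).trans_lt (lift_lt.2 (mk_Iio_lt_cof a₀))
  have : Nonempty A := ⟨a₀⟩
  choose! f hf hFf using fun a ha ↦ honto a ha (g a)
  obtain ⟨b, hb⟩ := fodor hA hS hf
  obtain ⟨c, hbc⟩ := exists_isStationary_fiber hA.ne' hC hb g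
  have : NoTopOrder A := one_lt_cof_iff.1 (one_lt_aleph0.trans hA)
  have := NoTopOrder.to_noMaxOrder A
  obtain ⟨a₁, ⟨⟨ha₁, hf₁⟩, hg₁⟩, a₂, ⟨⟨ha₂, hf₂⟩, hg₂⟩, hne⟩ := nontrivial_of_isStationary hbc
  have hF₁ : F a₁ b = c := by rw [← hf₁, hFf a₁ ha₁, hg₁]
  have hF₂ : F a₂ b = c := by rw [← hf₂, hFf a₂ ha₂, hg₂]
  exact ⟨a₁, a₂, hne, b, hF₁.trans hF₂.symm, hF₂.trans hg₁.symm, hg₁.trans hg₂.symm⟩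

theorem stmt4 (κ : Cardinal.{u}) (hκ : Cardinal.aleph0 ≤ κ) {C : Type v}
    (F : {o : Ordinal.{u} // o < (Order.succ κ).ord} →
         {o : Ordinal.{u} // o < (Order.succ κ).ord} → C)
    (hF : NoMonoK22 F)
    (honto : ∀ α : {o : Ordinal.{u} // o < (Order.succ κ).ord},
      κ.ord ≤ α.1 → ∀ c : C, ∃ β, β < α ∧ F α β = c) :
    BInextensible F := by
  have := isRegularCardinalOrder_Iio_ord (isRegular_succ hκ)
  have hcof := aleph0_lt_cof_Iio_ord (isRegular_succ hκ) (hκ.trans_lt (lt_succ κ))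
  let K : Iio (succ κ).ord := ⟨κ.ord, ord_lt_ord.2 (lt_succ κ)⟩
  exact stmt4_general hcof F (isStationary_Ici K) honto
end

section
/- Let κ be an infinite cardinal and let A, B, C be types with #B ≤ κ and #C ≤ κ. Suppose F : A → B → C satisfies (*) (no monochromatic K_{2,2}). Then the set {a ∈ A | the map b ↦ F a b is not injective} has cardinality at most κ. -/
universe u

universe v w

namespace NoMonoK22

variable {A B C : Type*} {F : A → B → C}

theorem left_eq_of_apply_eq (hF : NoMonoK22 F) {a₁ a₂ : A} {b₁ b₂ : B} {c : C} (hb : b₁ ≠ b₂)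
    (h₁₁ : F a₁ b₁ = c) (h₁₂ : F a₁ b₂ = c) (h₂₁ : F a₂ b₁ = c) (h₂₂ : F a₂ b₂ = c) :
    a₁ = a₂ := by
  by_contra ha
  exact hF ⟨a₁, a₂, b₁, b₂, ha, hb, h₁₁.trans h₁₂.symm, h₁₁.trans h₂₁.symm, h₁₁.trans h₂₂.symm⟩

/-- A non-injective `F a` takes some value `c` at two distinct points `b₁` and `b₂`; since
`F` has no monochromatic `K_{2,2}`, the triple `(b₁, b₂, c)` determines `a`. -/
theorem nonempty_not_injective_embedding (hF : NoMonoK22 F) :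
    Nonempty ({a : A // ¬ Function.Injective (F a)} ↪ B × B × C) := by
  have repeated_value (a : {a : A // ¬ Function.Injective (F a)}) :
      ∃ t : B × B × C, t.1 ≠ t.2.1 ∧ F a t.1 = t.2.2 ∧ F a t.2.1 = t.2.2 := by
    obtain ⟨b₁, b₂, heq, hne⟩ := Function.not_injective_iff.mp a.2
    exact ⟨(b₁, b₂, F a b₁), hne, rfl, heq.symm⟩
  choose t hne h₁ h₂ using repeated_value
  refine ⟨t, fun a a' haa' ↦ Subtype.ext ?_⟩
  exact hF.left_eq_of_apply_eq (hne a) (h₁ a) (h₂ a) (haa' ▸ h₁ a') (haa' ▸ h₂ a')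

end NoMonoK22

open Cardinal in
theorem stmt10_general {A : Type u} {B : Type v} {C : Type w} {F : A → B → C}
    (hF : NoMonoK22 F) :
    lift.{max v w} #{a : A // ¬ Function.Injective (F a)} ≤ lift.{u} #(B × B × C) :=
  lift_mk_le'.mpr hF.nonempty_not_injective_embedding

theorem stmt10 (κ : Cardinal.{u}) (hκ : Cardinal.aleph0 ≤ κ)
    {A B C : Type u} (F : A → B → C)
    (hB : Cardinal.mk B ≤ κ) (hC : Cardinal.mk C ≤ κ)
    (hF : NoMonoK22 F) :
    Cardinal.mk {a : A // ¬ Function.Injective (F a)} ≤ κ := by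
  have hcard : Cardinal.mk {a : A // ¬ Function.Injective (F a)} ≤
      Cardinal.mk B * (Cardinal.mk B * Cardinal.mk C) := by
    simpa only [Cardinal.lift_id, Cardinal.mk_prod] using stmt10_general hF
  exact hcard.trans (Cardinal.mul_le_of_le hκ hB (Cardinal.mul_le_of_le hκ hB hC))
end

section
/- Let κ be an infinite cardinal and let A, B, C be types with #A ≥ κ⁺, #B ≤ κ, #C ≤ κ. Suppose F : A → B → C satisfies (*) (no monochromatic K_{2,2}). Then there exists h : B → C such that the extension F' : (A ⊕ PUnit) → B → C, defined by F' (inl a) b = F a b and F' (inr ⋆) b = h b, still satisfies (*). In particular, the A-side of F can be properly extended while keeping B and C fixed. -/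
universe u

/-! A row with a repeated colour is determined by two columns carrying that colour and the colour
itself, so there are at most `#(B × B × C)` such rows. When `A` is larger, some row `F a` is
injective, and a second copy of it can be adjoined: an injective row lies in no monochromatic
`K_{2,2}`. -/

universe v w

namespace NoMonoK22

section

variable {A B C : Type*} {F : A → B → C}

theorem eq_of_repeated_color (hF : NoMonoK22 F) {a₁ a₂ : A} {b₁ b₂ : B} (hb : b₁ ≠ b₂)
    (h₁ : F a₁ b₁ = F a₁ b₂) (h₂ : F a₂ b₁ = F a₂ b₂) (h : F a₁ b₁ = F a₂ b₁) : a₁ = a₂ := by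
  by_contra ha
  exact hF ⟨a₁, a₂, b₁, b₂, ha, hb, h₁, h, h.trans h₂⟩

theorem sumElim_of_injective {A' : Type*} {G : A' → B → C} (hF : NoMonoK22 F)
    (hG : ∀ a, Function.Injective (G a)) :
    NoMonoK22 (fun (x : A ⊕ A') (b : B) =>
      Sum.elim (fun a => F a b) (fun a => G a b) x) := by
  rintro ⟨a₁ | a₁, a₂ | a₂, b₁, b₂, ha, hb, h_row, h_col, h_diag⟩
  · exact hF ⟨a₁, a₂, b₁, b₂, ne_of_apply_ne Sum.inl ha, hb, h_row, h_col, h_diag⟩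
  · exact hb (hG a₂ (h_col.symm.trans h_diag))
  · exact hb (hG a₁ h_row)
  · exact hb (hG a₁ h_row)

end

theorem exists_injective {A : Type u} {B : Type v} {C : Type w} {F : A → B → C}
    (hF : NoMonoK22 F)
    (hcard : Cardinal.lift.{u} (Cardinal.mk (B × B × C)) <
      Cardinal.lift.{max v w} (Cardinal.mk A)) :
    ∃ a, Function.Injective (F a) := by
  by_contra! h_noninj
  have h_repeat : ∀ a, ∃ b₁ b₂, F a b₁ = F a b₂ ∧ b₁ ≠ b₂ :=
    fun a => Function.not_injective_iff.mp (h_noninj a)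
  choose b₁ b₂ h_eq h_ne using h_repeat
  have h_inj : Function.Injective (fun a => (b₁ a, b₂ a, F a (b₁ a))) := by
    intro a a' h
    obtain ⟨hb₁, hb₂, h_color⟩ :
        b₁ a = b₁ a' ∧ b₂ a = b₂ a' ∧ F a (b₁ a) = F a' (b₁ a') := by
      simpa only [Prod.mk.injEq] using h
    rw [← hb₁] at h_color
    have h_eq' : F a' (b₁ a) = F a' (b₂ a) := by rw [hb₁, hb₂, h_eq a']
    exact hF.eq_of_repeated_color (h_ne a) (h_eq a) h_eq' h_color
  exact hcard.not_ge (Cardinal.lift_mk_le'.mpr ⟨⟨_, h_inj⟩⟩)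

end NoMonoK22

theorem stmt11_general {A : Type u} {B : Type v} {C : Type w} (F : A → B → C)
    (hcard : Cardinal.lift.{u} (Cardinal.mk (B × B × C)) <
      Cardinal.lift.{max v w} (Cardinal.mk A))
    (hF : NoMonoK22 F) :
    ∃ h : B → C,
      NoMonoK22 (fun (x : A ⊕ PUnit) (b : B) =>
        Sum.elim (fun a => F a b) (fun _ => h b) x) := by
  obtain ⟨a, ha⟩ := hF.exists_injective hcard
  exact ⟨F a, hF.sumElim_of_injective fun _ => ha⟩

theorem stmt11 (κ : Cardinal.{u}) (hκ : Cardinal.aleph0 ≤ κ)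
    {A B C : Type u} (F : A → B → C)
    (hA : Order.succ κ ≤ Cardinal.mk A)
    (hB : Cardinal.mk B ≤ κ) (hC : Cardinal.mk C ≤ κ)
    (hF : NoMonoK22 F) :
    ∃ h : B → C,
      NoMonoK22 (fun (x : A ⊕ PUnit) (b : B) =>
        Sum.elim (fun a => F a b) (fun _ => h b) x) := by
  have h_le : Cardinal.mk B * (Cardinal.mk B * Cardinal.mk C) ≤ κ :=
    Cardinal.mul_le_of_le hκ hB (Cardinal.mul_le_of_le hκ hB hC)
  exact stmt11_general F (by simpa using h_le.trans_lt (Order.succ_le_iff.mp hA)) hF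
end

section
/- Let κ be an infinite cardinal and let A, B, C be types with #A ≥ κ⁺⁺ (the double cardinal successor of κ) and #C ≤ κ. Suppose F : A → B → C satisfies (*) (no monochromatic K_{2,2}). Then #B ≤ κ, and there exists a ∈ A such that the map b ↦ F a b is injective. -/
/-!
If `F a` is not injective, it takes some colour `c` at two points `b₁ ≠ b₂`, and in the absence of
a monochromatic `K_{2,2}` the triple `(b₁, b₂, c)` determines `a`. So at most `#B * #B * #C`
elements `a` have `F a` non-injective. If `#B` exceeded `κ`, restricting `F` to `κ⁺` elements of `B`
would leave at most `κ⁺ * κ⁺ * κ < #A` such `a`, and any other `a` would inject `κ⁺` elements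
into `C`.
-/

universe u

section

open Cardinal Function Order

namespace NoMonoK22

theorem comp_right {A B B' C : Type*} {F : A → B → C} (hF : NoMonoK22 F) {f : B' → B}
    (hf : Injective f) : NoMonoK22 fun a ↦ F a ∘ f :=
  fun ⟨a₁, a₂, b₁, b₂, ha, hb, hmono⟩ ↦ hF ⟨a₁, a₂, f b₁, f b₂, ha, hf.ne hb, hmono⟩

theorem exists_injective_not_injective_to_prod {A B C : Type*} {F : A → B → C}
    (hF : NoMonoK22 F) :
    ∃ φ : {a // ¬ Injective (F a)} → (B × B) × C, Injective φ := by
  have hrepeat (a : {a // ¬ Injective (F a)}) : ∃ b₁ b₂, F a b₁ = F a b₂ ∧ b₁ ≠ b₂ :=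
    not_injective_iff.mp a.2
  choose f g hfg hne using hrepeat
  refine ⟨fun a ↦ ((f a, g a), F a (f a)), fun a a' h ↦ ?_⟩
  obtain ⟨⟨hf, hg⟩, hcolour⟩ : (f a = f a' ∧ g a = g a') ∧ F a (f a) = F a' (f a') := by
    simpa only [Prod.mk.injEq] using h
  by_contra ha
  refine hF ⟨a, a', f a, g a, Subtype.coe_ne_coe.mpr ha, hne a, hfg a, ?_, ?_⟩
  · rw [hcolour, hf]
  · rw [hcolour, hg, hfg a']

variable {A B C : Type u} {F : A → B → C}

theorem mk_not_injective_le (hF : NoMonoK22 F) : #{a // ¬ Injective (F a)} ≤ #B * #B * #C := by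
  obtain ⟨φ, hφ⟩ := hF.exists_injective_not_injective_to_prod
  simpa only [mul_def] using mk_le_of_injective hφ

theorem exists_injective_of_mk_mul_lt (hF : NoMonoK22 F) (hA : #B * #B * #C < #A) :
    ∃ a, Injective (F a) := by
  by_contra! h
  exact hA.not_ge <|
    (mk_congr (Equiv.subtypeUnivEquiv h)).symm.trans_le hF.mk_not_injective_le

theorem mk_le_of_succ_mul_lt {κ : Cardinal.{u}} (hF : NoMonoK22 F) (hC : #C ≤ κ)
    (hA : succ κ * succ κ * κ < #A) : #B ≤ κ := by
  by_contra! hB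
  obtain ⟨S, hS⟩ := le_mk_iff_exists_set.mp (succ_le_of_lt hB)
  have hmul : #S * #S * #C < #A := hS ▸ (mul_le_mul_right hC _).trans_lt hA
  obtain ⟨a, ha⟩ :=
    (hF.comp_right (f := ((↑) : S → B)) Subtype.val_injective).exists_injective_of_mk_mul_lt hmul
  have hSC : succ κ ≤ #C := hS ▸ mk_le_of_injective ha
  exact (lt_succ κ).not_ge (hSC.trans hC)

end NoMonoK22

theorem succ_mul_succ_mul_self_eq_succ {κ : Cardinal.{u}} (hκ : ℵ₀ ≤ κ) :
    succ κ * succ κ * κ = succ κ := by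
  have hsucc : ℵ₀ ≤ succ κ := hκ.trans (le_succ κ)
  rw [mul_eq_self hsucc, mul_eq_left hsucc (le_succ κ) (aleph0_pos.trans_le hκ).ne']

theorem stmt12_general (κ : Cardinal.{u}) {A B C : Type u} (F : A → B → C)
    (hA : succ κ * succ κ * κ < #A) (hC : #C ≤ κ) (hF : NoMonoK22 F) :
    #B ≤ κ ∧ ∃ a : A, Injective (F a) := by
  have hB : #B ≤ κ := hF.mk_le_of_succ_mul_lt hC hA
  have hB' : #B ≤ succ κ := hB.trans (le_succ κ)
  exact ⟨hB, hF.exists_injective_of_mk_mul_lt <|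
    (mul_le_mul' (mul_le_mul' hB' hB') hC).trans_lt hA⟩

end

theorem stmt12 (κ : Cardinal.{u}) (hκ : Cardinal.aleph0 ≤ κ)
    {A B C : Type u} (F : A → B → C)
    (hA : Order.succ (Order.succ κ) ≤ Cardinal.mk A)
    (hC : Cardinal.mk C ≤ κ)
    (hF : NoMonoK22 F) :
    Cardinal.mk B ≤ κ ∧ ∃ a : A, Function.Injective (F a) :=
  stmt12_general κ F
    ((succ_mul_succ_mul_self_eq_succ hκ).trans_lt ((Order.lt_succ _).trans_le hA)) hC hF
end

section
/- For every infinite cardinal κ, there exist: types A, B, C with #A = #B = κ⁺ and #C = κ; a subset C₀ ⊆ C with #C₀ = κ and #(C \ C₀) = κ; a bijection e from the ordinals below κ onto C₀; functions l₁, l₂ from the ordinals below κ to A such that the values l₁ α, l₂ α (over all α < κ) are pairwise distinct; and a function F : A → B → C satisfying: (i) F satisfies (*) (no monochromatic K_{2,2}); (ii) for every ordinal α < κ and every c ∈ C, there exists b ∈ B with F (l₁ α) b = c and F (l₂ α) b = c if and only if c ∉ C₀ or there is an ordinal β with α < β < κ and c = e β; (iii) for all distinct a, a' ∈ A such that {a,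 a'} ≠ {l₁ α, l₂ α} for every α < κ, and every c ∈ C, there exists b ∈ B with F a b = c and F a' b = c. -/
universe u

/-!
Take an order of type `κ⁺` on `A` and let the elements of `B` be all pairs `b = (z, c)`, where `b`
is meant to be the monochromatic 2-path with ends `z` and colour `c`. In a background colouring `G`,
the points above both ends of `b` send to `b` colours outside `C₀`, chosen so that no point repeats
such a colour; the remaining points, at most `κ` of them, send to `b` distinct colours from `C₀`;
and no point sends `c` to `b`. Two points then have at most one common neighbour in each colour, and
none in the colours from `C₀`. Now recolour `b = (z, c)` by `c` at the two ends in `z`, unless `c`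
is forbidden for `z` or `G` already joins `z` in colour `c`. Since `G` does not use `c` at `b`, this
creates the path it is meant to create and no other. Hence exactly the allowed 2-paths occur, once
each, for any choice of forbidden subsets of `C₀`.
-/

open Cardinal Set Function

section MonoPaths

variable {A B C : Type*}

/-- The monochromatic 2-paths coloured `c` on the two elements of `z`, given by their midpoints. -/
def monoPaths (F : A → B → C) (z : Sym2 A) (c : C) : Set B :=
  {b | ∀ a ∈ z, F a b = c}

theorem mem_monoPaths_mk {F : A → B → C} {a a' : A} {c : C} {b : B} :
    b ∈ monoPaths F s(a, a') c ↔ F a b = c ∧ F a' b = c :=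
  Sym2.ball

theorem noMonoK22_of_subsingleton_monoPaths {F : A → B → C}
    (h : ∀ z : Sym2 A, ¬z.IsDiag → ∀ c, (monoPaths F z c).Subsingleton) : NoMonoK22 F := by
  rintro ⟨a₁, a₂, b₁, b₂, ha, hb, h₁₂, h₂₁, h₂₂⟩
  exact hb (h s(a₁, a₂) (by simpa using ha) (F a₁ b₁)
    (mem_monoPaths_mk.2 ⟨rfl, h₂₁.symm⟩) (mem_monoPaths_mk.2 ⟨h₁₂.symm, h₂₂.symm⟩))

end MonoPaths

section Planting

variable {A C : Type*} {C₀ : Set C} {E : Sym2 A → Set C} {G : A → Sym2 A × C → C}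
  {z : Sym2 A} {c : C}

/-- A background colouring: every column `b = (z, c)` avoids the colour `c`, so that it is free to
become a 2-path on `z` coloured `c`, and takes colours from `C₀` at the ends in `z`. Columns do not
repeat colours from `C₀` and rows do not repeat colours outside `C₀`. -/
structure IsBackground (C₀ : Set C) (G : A → Sym2 A × C → C) : Prop where
  ne_snd (a : A) (b : Sym2 A × C) : G a b ≠ b.2
  mem_of_mem {a : A} {b : Sym2 A × C} : a ∈ b.1 → G a b ∈ C₀
  injOn_column (b : Sym2 A × C) : InjOn (G · b) {a | G a b ∈ C₀}
  injOn_row (a : A) : InjOn (G a) {b | G a b ∉ C₀}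

/-- The column `b = (z, c)` is to become a 2-path on `z` coloured `c`: this colour is not forbidden
by `E`, and the background `G` has no such path yet. -/
def IsPlantable (E : Sym2 A → Set C) (G : A → Sym2 A × C → C) (b : Sym2 A × C) : Prop :=
  b.2 ∉ E b.1 ∧ monoPaths G b.1 b.2 = ∅

open Classical in
/-- The background `G`, recoloured so that each plantable `(z, c)` is a 2-path on `z` coloured
`c`. -/
noncomputable def plant (E : Sym2 A → Set C) (G : A → Sym2 A × C → C) (a : A) (b : Sym2 A × C) :
    C :=
  if a ∈ b.1 ∧ IsPlantable E G b then b.2 else G a b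

namespace IsBackground

theorem notMem_of_mem_monoPaths (hG : IsBackground C₀ G) (hz : ¬z.IsDiag) {b : Sym2 A × C}
    (hb : b ∈ monoPaths G z c) : c ∉ C₀ := by
  induction z with | h p q
  obtain ⟨hp, hq⟩ := mem_monoPaths_mk.1 hb
  intro hc
  exact hz (Sym2.mk_isDiag_iff.2
    (hG.injOn_column b (show G p b ∈ C₀ from hp ▸ hc) (show G q b ∈ C₀ from hq ▸ hc)
      (hp.trans hq.symm)))

theorem subsingleton_monoPaths (hG : IsBackground C₀ G) (hz : ¬z.IsDiag) (c : C) :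
    (monoPaths G z c).Subsingleton := by
  intro b hb b' hb'
  have hc : c ∉ C₀ := hG.notMem_of_mem_monoPaths hz hb
  have ha := z.out_fst_mem
  exact hG.injOn_row _ (show G _ b ∉ C₀ from hb _ ha ▸ hc) (show G _ b' ∉ C₀ from hb' _ ha ▸ hc)
    ((hb _ ha).trans (hb' _ ha).symm)

theorem mem_monoPaths_plant (hG : IsBackground C₀ G) (hz : ¬z.IsDiag) {b : Sym2 A × C} :
    b ∈ monoPaths (plant E G) z c ↔ b ∈ monoPaths G z c ∨ b = (z, c) ∧ IsPlantable E G b := by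
  classical
  constructor
  · induction z with | h p q
    have hpq : p ≠ q := mt Sym2.mk_isDiag_iff.2 hz
    simp only [mem_monoPaths_mk, plant]
    rintro ⟨hp, hq⟩
    split_ifs at hp hq with hbp hbq hbq
    · exact .inr ⟨Prod.ext ((Sym2.mem_and_mem_iff hpq).1 ⟨hbp.1, hbq.1⟩) hp, hbp.2⟩
    · exact absurd (hq.trans hp.symm) (hG.ne_snd q b)
    · exact absurd (hp.trans hq.symm) (hG.ne_snd p b)
    · exact .inl ⟨hp, hq⟩
  · rintro (hb | ⟨rfl, hb⟩) a ha
    · have hab : a ∉ b.1 := fun h ↦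
        hG.notMem_of_mem_monoPaths hz hb (hb a ha ▸ hG.mem_of_mem h)
      rw [plant, if_neg fun h ↦ hab h.1, hb a ha]
    · rw [plant, if_pos ⟨ha, hb⟩]

theorem noMonoK22_plant (hG : IsBackground C₀ G) : NoMonoK22 (plant E G) := by
  refine noMonoK22_of_subsingleton_monoPaths fun z hz c b hb b' hb' ↦ ?_
  rw [hG.mem_monoPaths_plant hz] at hb hb'
  rcases hb with hb | ⟨rfl, hb⟩ <;> rcases hb' with hb' | ⟨rfl, hb'⟩
  · exact hG.subsingleton_monoPaths hz c hb hb'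
  · exact absurd hb'.2 (nonempty_of_mem hb).ne_empty
  · exact absurd hb.2 (nonempty_of_mem hb').ne_empty
  · rfl

theorem nonempty_monoPaths_plant_iff (hG : IsBackground C₀ G) (hE : ∀ z, E z ⊆ C₀)
    (hz : ¬z.IsDiag) : (monoPaths (plant E G) z c).Nonempty ↔ c ∉ E z := by
  constructor
  · rintro ⟨b, hb⟩
    rcases (hG.mem_monoPaths_plant hz).1 hb with hb | ⟨rfl, hb⟩
    · exact fun hc ↦ hG.notMem_of_mem_monoPaths hz hb (hE z hc)
    · exact hb.1
  · intro hc
    rcases (monoPaths G z c).eq_empty_or_nonempty with hempty | ⟨b, hb⟩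
    · exact ⟨(z, c), (hG.mem_monoPaths_plant hz).2 (.inr ⟨rfl, hc, hempty⟩)⟩
    · exact ⟨b, (hG.mem_monoPaths_plant hz).2 (.inl hb)⟩

end IsBackground

end Planting

section Existence

variable {A C : Type u} {κ : Cardinal.{u}}

theorem exists_embedding_mem_and_ne {X Y : Type u} (s : Set Y) (hs : ℵ₀ ≤ #s) (hX : #X ≤ #s)
    (t : X → Y) : ∃ f : X ↪ Y, ∀ x, f x ∈ s ∧ f x ≠ t x := by
  classical
  obtain ⟨i⟩ := hX
  have hmul : #(s × Bool) = #s := by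
    simpa using mul_eq_left hs (ofNat_le_aleph0.trans hs) two_ne_zero
  obtain ⟨φ⟩ := Cardinal.eq.1 hmul
  -- Of the two values reserved for `x`, at least one differs from `t x`.
  let f : X → s := fun x ↦ φ (i x, decide ((φ (i x, false) : Y) = t x))
  have hf : Injective f := fun x y hxy ↦ i.injective (congrArg Prod.fst (φ.injective hxy))
  refine ⟨⟨fun x ↦ f x, Subtype.val_injective.comp hf⟩, fun x ↦ ⟨(f x).2, ?_⟩⟩
  change (f x : Y) ≠ t x
  by_cases h : (φ (i x, false) : Y) = t x
  · have hne : (φ (i x, true) : Y) ≠ φ (i x, false) := by simp [Subtype.val_inj]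
    simpa only [f, h, decide_true] using hne
  · simpa only [f, decide_eq_false h] using h

theorem mk_sym2 (hA : ℵ₀ ≤ #A) : #(Sym2 A) = #A := by
  refine le_antisymm ?_ (mk_le_of_injective Sym2.diag_injective)
  calc #(Sym2 A) ≤ #(A × A) := mk_le_of_surjective Sym2.mk_surjective
    _ = #A := by rw [← mul_def, mul_eq_self hA]

theorem mk_sym2_prod (hA : ℵ₀ ≤ #A) (hC : #C ≤ #A) (hC' : #C ≠ 0) : #(Sym2 A × C) = #A := by
  rw [← mul_def, mk_sym2 hA, mul_eq_left hA hC hC']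

section LinearOrder

variable [LinearOrder A]

theorem mk_columns_below_le (hκ : ℵ₀ ≤ κ) {a : A} (ha : #(Iio a) ≤ κ) (hC : #C ≤ κ) :
    #{b : Sym2 A × C // ∀ x ∈ b.1, x < a} ≤ κ := by
  let f : Iio a × Iio a × C → {b : Sym2 A × C // ∀ x ∈ b.1, x < a} :=
    fun x ↦ ⟨(s(x.1, x.2.1), x.2.2), Sym2.ball.2 ⟨x.1.2, x.2.1.2⟩⟩
  have hf : Surjective f := by
    rintro ⟨⟨⟨p, q⟩, c⟩, h⟩
    obtain ⟨hp, hq⟩ := Sym2.ball.1 h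
    exact ⟨(⟨p, hp⟩, ⟨q, hq⟩, c), rfl⟩
  calc #{b : Sym2 A × C // ∀ x ∈ b.1, x < a} ≤ #(Iio a × Iio a × C) := mk_le_of_surjective hf
    _ = #(Iio a) * (#(Iio a) * #C) := by simp only [mk_prod, lift_id]
    _ ≤ κ * (κ * κ) := by gcongr
    _ = κ := by rw [mul_eq_self hκ, mul_eq_self hκ]

theorem mk_not_above_le (hκ : ℵ₀ ≤ κ) (hA : ∀ a : A, #(Iio a) ≤ κ) (z : Sym2 A) :
    #{a // ¬∀ x ∈ z, x < a} ≤ κ := by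
  induction z with | h p q
  calc #{a // ¬∀ x ∈ s(p, q), x < a} ≤ #(Iic (p ⊔ q)) :=
        mk_le_mk_of_subset fun a (ha : ¬∀ x ∈ s(p, q), x < a) ↦ by
          rwa [Sym2.ball, ← sup_lt_iff, not_lt] at ha
    _ ≤ #(Iio (p ⊔ q)) + 1 := by rw [← Iio_insert]; exact mk_insert_le
    _ ≤ κ + κ := by gcongr; exacts [hA _, one_le_aleph0.trans hκ]
    _ = κ := add_eq_self hκ

theorem exists_isBackground {C₀ : Set C} (hκ : ℵ₀ ≤ κ) (hA : ∀ a : A, #(Iio a) ≤ κ) (hC : #C ≤ κ)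
    (hC₀ : κ ≤ #C₀) (hC₁ : κ ≤ #↥C₀ᶜ) : ∃ G : A → Sym2 A × C → C, IsBackground C₀ G := by
  classical
  choose row h_row using fun a : A ↦ exists_embedding_mem_and_ne C₀ᶜ (hκ.trans hC₁)
    ((mk_columns_below_le hκ (hA a) hC).trans hC₁) (fun b ↦ b.1.2)
  choose column h_column using fun b : Sym2 A × C ↦ exists_embedding_mem_and_ne C₀ (hκ.trans hC₀)
    ((mk_not_above_le hκ hA b.1).trans hC₀) (fun _ ↦ b.2)
  let G (a : A) (b : Sym2 A × C) : C :=
    if h : ∀ x ∈ b.1, x < a then row a ⟨b, h⟩ else column b ⟨a, h⟩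
  have G_mem {a b} : G a b ∈ C₀ ↔ ¬∀ x ∈ b.1, x < a := by
    by_cases h : ∀ x ∈ b.1, x < a
    · simpa only [G, dif_pos h] using iff_of_false (h_row a ⟨b, h⟩).1 (not_not_intro h)
    · simpa only [G, dif_neg h] using iff_of_true (h_column b ⟨a, h⟩).1 h
  refine ⟨G, fun a b ↦ ?_, fun {a b} hab ↦ G_mem.2 fun h ↦ (h a hab).false,
    fun b a ha a' ha' h ↦ ?_, fun a b hb b' hb' h ↦ ?_⟩
  · by_cases h : ∀ x ∈ b.1, x < a
    · simpa only [G, dif_pos h] using (h_row a ⟨b, h⟩).2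
    · simpa only [G, dif_neg h] using (h_column b ⟨a, h⟩).2
  · replace ha := G_mem.1 ha
    replace ha' := G_mem.1 ha'
    simp only [G, dif_neg ha, dif_neg ha'] at h
    exact congrArg Subtype.val ((column b).injective h)
  · replace hb := of_not_not (mt G_mem.2 hb)
    replace hb' := of_not_not (mt G_mem.2 hb')
    simp only [G, dif_pos hb, dif_pos hb'] at h
    exact congrArg Subtype.val ((row a).injective h)

theorem exists_noMonoK22_and_nonempty_monoPaths_iff {C₀ : Set C} (hκ : ℵ₀ ≤ κ)
    (hA : ∀ a : A, #(Iio a) ≤ κ) (hC : #C ≤ κ) (hC₀ : κ ≤ #C₀) (hC₁ : κ ≤ #↥C₀ᶜ)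
    {E : Sym2 A → Set C} (hE : ∀ z, E z ⊆ C₀) :
    ∃ F : A → Sym2 A × C → C, NoMonoK22 F ∧
      ∀ z : Sym2 A, ¬z.IsDiag → ∀ c, (monoPaths F z c).Nonempty ↔ c ∉ E z := by
  obtain ⟨G, hG⟩ := exists_isBackground hκ hA hC hC₀ hC₁
  exact ⟨plant E G, hG.noMonoK22_plant, fun _ hz _ ↦ hG.nonempty_monoPaths_plant_iff hE hz⟩

end LinearOrder

end Existence

section Ladder

variable {I A C : Type*}

theorem injective_sym2Mk_of_disjoint {l₁ l₂ : I → A} (h₁ : Injective l₁)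
    (h₁₂ : ∀ α β, l₁ α ≠ l₂ β) : Injective fun α ↦ s(l₁ α, l₂ α) := by
  intro α β h
  rcases Sym2.eq_iff.1 h with ⟨h, -⟩ | ⟨h, -⟩
  · exact h₁ h
  · exact absurd h (h₁₂ α β)

variable [LinearOrder I] {C₀ : Set C} {e : I ≃ C₀} {rung : I → Sym2 A}

/-- The colours forbidden on a pair when the rung `α` of a ladder is to miss the colours `e β`,
`β ≤ α`, and all other pairs are to miss no colour. -/
def ladderForbidden (e : I ≃ C₀) (rung : I → Sym2 A) (z : Sym2 A) : Set C :=
  {c | ∃ α, rung α = z ∧ ∃ β ≤ α, (e β : C) = c}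

theorem ladderForbidden_subset (z : Sym2 A) : ladderForbidden e rung z ⊆ C₀ := by
  rintro _ ⟨-, -, β, -, rfl⟩
  exact (e β).2

theorem ladderForbidden_of_notMem_range {z : Sym2 A} (hz : z ∉ range rung) :
    ladderForbidden e rung z = ∅ :=
  eq_empty_of_forall_notMem fun _ ⟨α, hα, _⟩ ↦ hz ⟨α, hα⟩

theorem notMem_ladderForbidden_rung_iff (h_rung : Injective rung) {α : I} {c : C} :
    c ∉ ladderForbidden e rung (rung α) ↔ c ∉ C₀ ∨ ∃ β, α < β ∧ c = e β := by
  by_cases hc : c ∈ C₀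
  · obtain ⟨β, rfl⟩ : ∃ β, (e β : C) = c := ⟨e.symm ⟨c, hc⟩, by simp⟩
    simp [ladderForbidden, h_rung.eq_iff, Subtype.val_inj]
  · exact iff_of_true (fun h ↦ hc (ladderForbidden_subset _ h)) (.inl hc)

end Ladder

section InitialOrdinal

variable {κ : Cardinal.{u}}

theorem mk_ordinal_lt_ord : #{o : Ordinal.{u} // o < κ.ord} = lift.{u + 1} κ :=
  (mk_Iio_ordinal κ.ord).trans (congrArg lift (card_ord κ))

theorem nonempty_ordinal_lt_ord_equiv {X : Type u} (hX : #X = κ) :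
    Nonempty ({o : Ordinal.{u} // o < κ.ord} ≃ X) := by
  rw [← lift_mk_eq', mk_ordinal_lt_ord, hX, lift_lift]

theorem exists_injective_injective_disjoint {X : Type u} (hκ : ℵ₀ ≤ κ) (hX : κ ≤ #X) :
    ∃ l₁ l₂ : {o : Ordinal.{u} // o < κ.ord} → X,
      Injective l₁ ∧ Injective l₂ ∧ ∀ α β, l₁ α ≠ l₂ β := by
  let I := {o : Ordinal.{u} // o < κ.ord}
  obtain ⟨l⟩ : Nonempty (I ⊕ I ↪ X) := by
    rw [← lift_mk_le', mk_sum, mk_ordinal_lt_ord, lift_id, ← lift_add, add_eq_self hκ, lift_lift]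
    exact lift_le.2 hX
  exact ⟨l ∘ Sum.inl, l ∘ Sum.inr, l.injective.comp Sum.inl_injective,
    l.injective.comp Sum.inr_injective, fun _ _ ↦ l.injective.ne Sum.inl_ne_inr⟩

end InitialOrdinal

theorem stmt14 (κ : Cardinal.{u}) (hκ : Cardinal.aleph0 ≤ κ) :
    ∃ (A B C : Type u) (C₀ : Set C)
      (e : {o : Ordinal.{u} // o < κ.ord} ≃ C₀)
      (l₁ l₂ : {o : Ordinal.{u} // o < κ.ord} → A)
      (F : A → B → C),
      Cardinal.mk A = Order.succ κ ∧ Cardinal.mk B = Order.succ κ ∧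
      Cardinal.mk C = κ ∧
      Cardinal.mk C₀ = κ ∧ Cardinal.mk ↥(C₀ᶜ) = κ ∧
      -- the points `l₁ α`, `l₂ α` (over all `α < κ`) are pairwise distinct
      Function.Injective l₁ ∧ Function.Injective l₂ ∧
      (∀ α β, l₁ α ≠ l₂ β) ∧
      -- (i)
      NoMonoK22 F ∧
      -- (ii)
      (∀ (α : {o : Ordinal.{u} // o < κ.ord}) (c : C),
        (∃ b : B, F (l₁ α) b = c ∧ F (l₂ α) b = c) ↔
          (c ∉ C₀ ∨ ∃ β, α < β ∧ c = (e β : C))) ∧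
      -- (iii)
      (∀ a a' : A, a ≠ a' →
        (∀ α, ({a, a'} : Set A) ≠ {l₁ α, l₂ α}) →
        ∀ c : C, ∃ b : B, F a b = c ∧ F a' b = c) := by
  let A := (Order.succ κ).ord.ToType
  let C := κ.out ⊕ κ.out
  let C₀ : Set C := range Sum.inl
  have hA : #A = Order.succ κ := mk_ord_toType _
  have hIio (a : A) : #(Iio a) ≤ κ :=
    Order.lt_succ_iff.1 ((mk_Iio_lt a (by simp [A])).trans_eq hA)
  have hC : #C = κ := by simp [C, add_eq_self hκ]
  have hC₀ : #C₀ = κ := by rw [mk_range_inl, mk_out, lift_id]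
  have hC₁ : #↥C₀ᶜ = κ := by rw [compl_range_inl, mk_range_inr, mk_out, lift_id]
  have hκA : κ ≤ #A := hA ▸ Order.le_succ κ
  have hB : #(Sym2 A × C) = Order.succ κ :=
    (mk_sym2_prod (hκ.trans hκA) (hC ▸ hκA) (hC ▸ (aleph0_pos.trans_le hκ).ne')).trans hA
  obtain ⟨e⟩ := nonempty_ordinal_lt_ord_equiv hC₀
  obtain ⟨l₁, l₂, hl₁, hl₂, hl⟩ := exists_injective_injective_disjoint hκ hκA
  obtain ⟨F, hF, hpaths⟩ := exists_noMonoK22_and_nonempty_monoPaths_iff hκ hIio hC.le hC₀.ge hC₁.ge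
    (ladderForbidden_subset (e := e) (rung := fun α ↦ s(l₁ α, l₂ α)))
  simp only [Set.Nonempty, Sym2.forall, Sym2.mk_isDiag_iff, mem_monoPaths_mk] at hpaths
  refine ⟨A, Sym2 A × C, C, C₀, e, l₁, l₂, F, hA, hB, hC, hC₀, hC₁, hl₁, hl₂, hl, hF,
    fun α c ↦ ?_, fun a a' ha hladder c ↦ ?_⟩
  · exact (hpaths _ _ (hl α α) c).trans
      (notMem_ladderForbidden_rung_iff (injective_sym2Mk_of_disjoint hl₁ hl))
  · rw [hpaths _ _ ha, ladderForbidden_of_notMem_range]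
    · exact notMem_empty c
    · rintro ⟨α, hα⟩
      exact hladder α (pair_eq_pair_iff.2 (Sym2.eq_iff.1 hα.symm))
end

section
/- Let κ be an infinite cardinal and suppose (A, B, C, F, C₀, e, l₁, l₂) and (A', B', C', F', C₀', e', l₁', l₂') are two tuples each satisfying the Step-I conditions for κ: #A = #B = κ⁺, #C = κ, C₀ ⊆ C with #C₀ = #(C \ C₀) = κ, e a bijection from the ordinals below κ onto C₀, l₁, l₂ functions from the ordinals below κ to A with pairwise distinct values, F : A → B → C satisfying (*), and: (ii) for every α < κ and c ∈ C, a monochromatic 2-path on l₁ α, l₂ α colored c exists if and only if c ∉ C₀ or c = e β for some β with α < β < κ; (iii) for every pair of distinct a, a' ∈ A not of the form {l₁ α, l₂ α} and every c ∈ C, a monochromatic 2-path on a, a' colored c exists. If σ : A ≃ A', τ : B ≃ B', ρ : C ≃ C' are bijections with ρ (F a b) = F' (σ a) (τ b) for all a, b, then ρ maps C₀ onto C₀', ρ (e α) = e' α for every α < κ, and {σ (l₁ α), σ (l₂ α)} = {l₁' α, l₂' α} for every α < κ. -/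
universe u

/-- The data of a Step-I model: a coloring `F`, a distinguished set of
colors `C₀` enumerated by `e`, and the distinguished pairs `l₁ α, l₂ α`. -/
structure StepIData (κ : Cardinal.{u}) (A B C : Type u) where
  F : A → B → C
  C₀ : Set C
  e : {o : Ordinal.{u} // o < κ.ord} ≃ C₀
  l₁ : {o : Ordinal.{u} // o < κ.ord} → A
  l₂ : {o : Ordinal.{u} // o < κ.ord} → A

/-- The Step-I conditions (Lemma `Step1` of the paper). -/
def StepIConds (κ : Cardinal.{u}) {A B C : Type u} (d : StepIData κ A B C) : Prop :=
  Cardinal.mk A = Order.succ κ ∧ Cardinal.mk B = Order.succ κ ∧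
  Cardinal.mk C = κ ∧
  Cardinal.mk d.C₀ = κ ∧ Cardinal.mk ↥(d.C₀ᶜ) = κ ∧
  Function.Injective d.l₁ ∧ Function.Injective d.l₂ ∧
  (∀ α β, d.l₁ α ≠ d.l₂ β) ∧
  NoMonoK22 d.F ∧
  (∀ (α : {o : Ordinal.{u} // o < κ.ord}) (c : C),
    (∃ b : B, d.F (d.l₁ α) b = c ∧ d.F (d.l₂ α) b = c) ↔
      (c ∉ d.C₀ ∨ ∃ β, α < β ∧ c = (d.e β : C))) ∧
  (∀ a a' : A, a ≠ a' →
    (∀ α, ({a, a'} : Set A) ≠ {d.l₁ α, d.l₂ α}) →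
    ∀ c : C, ∃ b : B, d.F a b = c ∧ d.F a' b = c)

/-! Call a color missed by a set `S` of vertices of `A` if no vertex of `B` is joined to all of `S`
in that color. Isomorphisms of colorings transport missed colors. The distinguished pairs are
exactly the pairs that miss some color, and the `α`-th one misses the initial segment
`{e β | β ≤ α}`. So an isomorphism permutes the distinguished pairs and, by inclusion of their sets
of missed colors, induces an automorphism of the index order; a well-order has only the trivial
one. -/

open Function Set

section Order

theorem exists_orderIso_of_range_eq {I J X : Type*} [Preorder I] [Preorder J] [Preorder X]
    {f : I ↪o X} {g : J ↪o X} (h : range f = range g) :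
    ∃ φ : I ≃o J, ∀ i, f i = g (φ i) := by
  let φ : I ≃o J := f.orderIso.trans ((OrderIso.setCongr _ _ h).trans g.orderIso.symm)
  have hφ (i : I) : g.orderIso (φ i) = OrderIso.setCongr _ _ h (f.orderIso i) :=
    g.orderIso.apply_symm_apply _
  exact ⟨φ, fun i ↦ (congrArg Subtype.val (hφ i)).symm⟩

variable {I J X : Type*} [PartialOrder I] [PartialOrder J]

/-- The embedding of a partial order `I` into the sets of labels, for an injective labeling `f`
of `I`: an index is represented by the labels of the initial segment it closes. -/
def imageIic (f : I ↪ X) : I ↪o Set X :=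
  OrderEmbedding.ofMapLEIff (fun i ↦ f '' Iic i) fun i j ↦ by
    rw [image_subset_image_iff f.injective, Iic_subset_Iic]

theorem apply_eq_of_imageIic_eq {f : I ↪ X} {g : J ↪ X} {φ : I ≃o J}
    (h : ∀ i, imageIic f i = imageIic g (φ i)) (i : I) : f i = g (φ i) := by
  obtain ⟨j, hji, hj⟩ : f i ∈ imageIic g (φ i) := h i ▸ mem_image_of_mem f self_mem_Iic
  obtain ⟨k, hkj, hk⟩ : g j ∈ imageIic f (φ.symm j) := by
    rw [h, φ.apply_symm_apply]
    exact mem_image_of_mem g self_mem_Iic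
  have hki : k = i := f.injective (hk.trans hj)
  have hij : φ i ≤ j := φ.le_symm_apply.mp (hki ▸ hkj)
  rw [← hj, le_antisymm hji hij]

end Order

section MissedColors

variable {A B C A' B' C' : Type*} {F' : A' → B' → C'} {F : A → B → C}

/-- The colors `c` such that no vertex `b` is joined to all of `S` in color `c`. For `S = {a, a'}`
these are the colors of no monochromatic 2-path on `a, a'`. -/
def missedColors (F : A → B → C) (S : Set A) : Set C :=
  {c | ¬∃ b, ∀ a ∈ S, F a b = c}

theorem mem_missedColors {S : Set A} {c : C} :
    c ∈ missedColors F S ↔ ¬∃ b, ∀ a ∈ S, F a b = c :=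
  Iff.rfl

theorem mem_missedColors_pair {a a' : A} {c : C} :
    c ∈ missedColors F {a, a'} ↔ ¬∃ b, F a b = c ∧ F a' b = c := by
  simp only [mem_missedColors, mem_insert_iff, mem_singleton_iff, forall_eq_or_imp,
    forall_eq]

theorem missedColors_image {σ : A → A'} {τ : B → B'} (hτ : Surjective τ) (ρ : C ≃ C')
    (hiso : ∀ a b, ρ (F a b) = F' (σ a) (τ b)) (S : Set A) :
    missedColors F' (σ '' S) = ρ '' missedColors F S := by
  ext c
  simp only [mem_missedColors, ρ.image_eq_preimage_symm, mem_preimage, forall_mem_image,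
    hτ.exists, ← hiso, ρ.eq_symm_apply]

end MissedColors

section CodesOrder

variable {I J A B C A' B' C' : Type*} [PartialOrder I] [PartialOrder J]
  {F' : A' → B' → C'} {P' : J → Set A'} {e' : J ↪ C'} {F : A → B → C} {P : I → Set A} {e : I ↪ C}

/-- The coloring `F` records the order of `I`: the distinguished pairs `P i`, encoded as
two-element sets, are the only pairs that miss a color, and `P i` misses the colors `e j` with
`j ≤ i`. This is what conditions (ii) and (iii) of Step I say about `F`. -/
structure CodesOrder (F : A → B → C) (P : I → Set A) (e : I ↪ C) : Prop where
  encard_eq_two : ∀ i, (P i).encard = 2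
  missedColors_eq : ∀ i, missedColors F (P i) = imageIic e i
  mem_range : ∀ S, S.encard = 2 → (missedColors F S).Nonempty → S ∈ range P

namespace CodesOrder

theorem image_mem_range (h : CodesOrder F P e) (h' : CodesOrder F' P' e')
    {σ : A → A'} {τ : B → B'} (hσ : Injective σ) (hτ : Surjective τ) (ρ : C ≃ C')
    (hiso : ∀ a b, ρ (F a b) = F' (σ a) (τ b)) (i : I) :
    σ '' P i ∈ range P' := by
  refine h'.mem_range _ ((hσ.encard_image _).trans (h.encard_eq_two i)) ?_
  rw [missedColors_image hτ ρ hiso, h.missedColors_eq]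
  exact (nonempty_Iic.image e).image ρ

theorem imageIic_eq_of_image_eq (h : CodesOrder F P e) (h' : CodesOrder F' P' e')
    {σ : A → A'} {τ : B → B'} (hτ : Surjective τ) (ρ : C ≃ C')
    (hiso : ∀ a b, ρ (F a b) = F' (σ a) (τ b)) {i : I} {j : J} (hij : σ '' P i = P' j) :
    imageIic (e.trans ρ.toEmbedding) i = imageIic e' j :=
  calc imageIic (e.trans ρ.toEmbedding) i
    _ = ρ '' imageIic e i := image_comp ρ e (Iic i)
    _ = ρ '' missedColors F (P i) := by rw [h.missedColors_eq]
    _ = missedColors F' (P' j) := by rw [← hij, missedColors_image hτ ρ hiso]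
    _ = imageIic e' j := h'.missedColors_eq j

theorem range_imageIic_eq (h : CodesOrder F P e) (h' : CodesOrder F' P' e')
    (σ : A ≃ A') (τ : B ≃ B') (ρ : C ≃ C') (hiso : ∀ a b, ρ (F a b) = F' (σ a) (τ b)) :
    range (imageIic (e.trans ρ.toEmbedding)) = range (imageIic e') := by
  have hiso_symm : ∀ a b, ρ.symm (F' a b) = F (σ.symm a) (τ.symm b) := fun a b ↦ by
    rw [ρ.symm_apply_eq, hiso, σ.apply_symm_apply, τ.apply_symm_apply]
  apply Subset.antisymm
  · rintro _ ⟨i, rfl⟩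
    obtain ⟨j, hj⟩ := h.image_mem_range h' σ.injective τ.surjective ρ hiso i
    exact ⟨j, (h.imageIic_eq_of_image_eq h' τ.surjective ρ hiso hj.symm).symm⟩
  · rintro _ ⟨j, rfl⟩
    obtain ⟨i, hi⟩ := h'.image_mem_range h σ.symm.injective τ.symm.surjective ρ.symm hiso_symm j
    have hij : σ '' P i = P' j := by rw [hi, σ.image_symm_image]
    exact ⟨i, h.imageIic_eq_of_image_eq h' τ.surjective ρ hiso hij⟩

end CodesOrder

theorem stmt15_general (h : CodesOrder F P e) (h' : CodesOrder F' P' e')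
    (σ : A ≃ A') (τ : B ≃ B') (ρ : C ≃ C') (hiso : ∀ a b, ρ (F a b) = F' (σ a) (τ b)) :
    ρ '' range e = range e' ∧
      ∃ φ : I ≃o J, (∀ i, ρ (e i) = e' (φ i)) ∧ ∀ i, σ '' P i = P' (φ i) := by
  obtain ⟨φ, hφ⟩ := exists_orderIso_of_range_eq (h.range_imageIic_eq h' σ τ ρ hiso)
  have he : ∀ i, ρ (e i) = e' (φ i) := apply_eq_of_imageIic_eq hφ
  refine ⟨?_, φ, he, fun i ↦ ?_⟩
  · rw [← range_comp, ← φ.surjective.range_comp e']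
    exact congrArg range (funext he)
  · obtain ⟨j, hj⟩ := h.image_mem_range h' σ.injective τ.surjective ρ hiso i
    have hij := h.imageIic_eq_of_image_eq h' τ.surjective ρ hiso hj.symm
    rw [← hj, (imageIic e').injective (hij.symm.trans (hφ i))]

end CodesOrder

section StepI

variable {κ : Cardinal.{u}} {A B C : Type u} {d : StepIData κ A B C}

/-- The enumeration of the distinguished colors, as an embedding into all colors. -/
def StepIData.color (d : StepIData κ A B C) : {o : Ordinal.{u} // o < κ.ord} ↪ C :=
  d.e.toEmbedding.trans (Embedding.subtype (· ∈ d.C₀))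

theorem StepIData.color_apply (d : StepIData κ A B C) (α : {o : Ordinal.{u} // o < κ.ord}) :
    d.color α = d.e α :=
  rfl

theorem StepIData.range_color (d : StepIData κ A B C) : range d.color = d.C₀ :=
  calc range d.color
    _ = Subtype.val '' range d.e := range_comp Subtype.val d.e
    _ = d.C₀ := by rw [d.e.range_eq_univ, image_univ, Subtype.range_coe]

theorem StepIData.mem_imageIic_color {α : {o : Ordinal.{u} // o < κ.ord}} {c : C} :
    c ∈ imageIic d.color α ↔ ¬(c ∉ d.C₀ ∨ ∃ β, α < β ∧ c = (d.e β : C)) := by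
  constructor
  · rintro ⟨β, hβα, rfl⟩ (hβ | ⟨γ, hαγ, hβγ⟩)
    · exact hβ (d.e β).2
    · exact (hαγ.trans_le ((d.color.injective hβγ).symm.trans_le hβα)).false
  · intro hc
    obtain ⟨hcC₀, hlt⟩ := not_or.mp hc
    obtain ⟨β, rfl⟩ : c ∈ range d.color := d.range_color ▸ not_not.mp hcC₀
    exact ⟨β, not_lt.mp fun hαβ ↦ hlt ⟨β, hαβ, rfl⟩, rfl⟩

theorem StepIConds.codesOrder (hd : StepIConds κ d) :
    CodesOrder d.F (fun α ↦ {d.l₁ α, d.l₂ α}) d.color := by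
  obtain ⟨-, -, -, -, -, -, -, hne, -, hpath, hpath_other⟩ := hd
  refine ⟨fun α ↦ encard_pair (hne α α), fun α ↦ ?_, fun S hS ⟨c, hc⟩ ↦ ?_⟩
  · ext c
    rw [mem_missedColors_pair, hpath, StepIData.mem_imageIic_color]
  · obtain ⟨a, a', haa', rfl⟩ := encard_eq_two.mp hS
    by_contra hP
    exact mem_missedColors_pair.mp hc (hpath_other a a' haa' (fun α h ↦ hP ⟨α, h.symm⟩) c)

end StepI

theorem stmt15 (κ : Cardinal.{u}) (hκ : Cardinal.aleph0 ≤ κ)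
    {A B C A' B' C' : Type u}
    (d : StepIData κ A B C) (d' : StepIData κ A' B' C')
    (hd : StepIConds κ d) (hd' : StepIConds κ d')
    (σ : A ≃ A') (τ : B ≃ B') (ρ : C ≃ C')
    (hiso : ∀ (a : A) (b : B), ρ (d.F a b) = d'.F (σ a) (τ b)) :
    ρ '' d.C₀ = d'.C₀ ∧
    (∀ α, ρ (d.e α : C) = (d'.e α : C')) ∧
    (∀ α, ({σ (d.l₁ α), σ (d.l₂ α)} : Set A') = {d'.l₁ α, d'.l₂ α}) := by
  obtain ⟨hC₀, φ, h⟩ := stmt15_general hd.codesOrder hd'.codesOrder σ τ ρ hiso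
  simpa only [Subsingleton.elim φ (.refl _), OrderIso.refl_apply, image_pair,
    StepIData.color_apply, StepIData.range_color] using And.intro hC₀ h
end

section
/- Let κ be an infinite cardinal, let C be a type with #C = κ, let C₀ ⊆ C with #C₀ = κ and #(C \ C₀) = κ, and let S be a family of subsets S_α ⊆ C₀ indexed by the ordinals α with 0 < α < κ⁺, pairwise distinct, with #(S_α) = κ and #(C₀ \ S_α) = κ for each α. Then there exist: types A, B with #A = #B = κ⁺; a bijection e from the ordinals below κ onto C₀; functions l₁, l₂ from the ordinals below κ to A with pairwise distinct values; an injective function m from the ordinals below κ⁺ to A whose range is disjoint from {l₁ α, l₂ α : α < κ} and with #(A \ range m) = κ⁺; and F : A → B → C such that: (i) F satisfies (*); (ii) for every α < κ and c ∈ C, a monochromatic 2-path on l₁ α, l₂ α colored c exists if and only if c ∉ C₀ or c = e β for some β with α < β < κ; (iii) for every ordinal α with 0 < α < κ⁺ and every c ∈ C, a monochromatic 2-path on m 0, m α colored c exists if and only if c ∈ S_α; (iv) for all distinct a, a' ∈ A such that {a, a'} is neither of the form {l₁ α, l₂ α} (α < κ) nor of the form {m 0, m α} (0 < α < κ⁺),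 and every c ∈ C, a monochromatic 2-path on a, a' colored c exists. -/
universe u

lemma ord_succ_pos (κ : Cardinal.{u}) : (0 : Ordinal.{u}) < (Order.succ κ).ord := by
  rw [Cardinal.lt_ord]
  simp [Order.bot_lt_succ κ]

/-- The ordinal `0` as an ordinal below `κ⁺`. -/
def ordZero (κ : Cardinal.{u}) : {o : Ordinal.{u} // o < (Order.succ κ).ord} :=
  ⟨0, ord_succ_pos κ⟩

/-!
A demand is a pair `{x, y}` of points together with a colour `c`, asking for a column in which `x`
and `y` both have colour `c`. Columns are indexed by demands, and points and demands are stratified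
by a well-founded rank. A column gives the colour asked for to the two points of its demand and is
otherwise injective on the points of rank at most its own; a point of larger rank is coloured
injectively along the earlier columns, and there differently from a base point of least rank.

A column thus creates only one monochromatic 2-path among its own old points, so a monochromatic
`K_{2,2}` can only come from a demand already met by an earlier column. It therefore suffices to
keep, by recursion on the rank, the demands not met by an earlier kept column. No unwanted 2-path
joins two points of least rank, nor the base point to any point, so the colours of these pairs can
be prescribed at will. The demands at the base point are never met early, which makes the number of
columns as large as the number of points.
-/

section Construction

open Cardinal

theorem exists_injOn_forall_ne {X C : Type u} [Infinite C] {s : Set X} (hs : #s ≤ #C) (g : X → C) :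
    ∃ f : X → C, Set.InjOn f s ∧ ∀ x, f x ≠ g x := by
  obtain ⟨i⟩ := hs
  obtain ⟨j, hj⟩ := Set.exists_injOn_iff_injective.2 ⟨i, i.injective⟩
  have hCC : #(C × Bool) = #C := by
    simp [mul_eq_left (aleph0_le_mk C) (ofNat_lt_aleph0.le.trans (aleph0_le_mk C))]
  obtain ⟨e⟩ := Cardinal.eq.1 hCC
  refine ⟨fun x => e (j x, !(e.symm (g x)).2), fun x hx y hy h => ?_, fun x h => ?_⟩
  · exact hj hx hy (congrArg Prod.fst (e.injective h))
  · simpa using congrArg Prod.snd (e.eq_symm_apply.2 h)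

theorem exists_eqOn_const_and_mem_of_eq {X C : Type u} [Infinite C] {s : Set X} (hs : #s ≤ #C)
    (z : Set X) (c : C) :
    ∃ f : X → C, (∀ x ∈ z, f x = c) ∧
      ∀ x ∈ s, ∀ y ∈ s, x ≠ y → f x = f y → x ∈ z ∧ y ∈ z := by
  classical
  obtain ⟨f, hf, hfc⟩ := exists_injOn_forall_ne hs fun _ => c
  refine ⟨z.piecewise (fun _ => c) f, fun x hx => by simp [hx], fun x hx y hy hxy h => ?_⟩
  by_cases hxz : x ∈ z <;> by_cases hyz : y ∈ z
  · exact ⟨hxz, hyz⟩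
  · exact absurd (by simpa [hxz, hyz] using h.symm) (hfc y)
  · exact absurd (by simpa [hxz, hyz] using h) (hfc x)
  · exact absurd (hf hx hy (by simpa [hxz, hyz] using h)) hxy

theorem exists_kernel_of_wellFounded {X : Type*} {r : X → X → Prop} (hr : WellFounded r)
    (D : Set X) : ∃ G : Set X, ∀ x, x ∈ G ↔ x ∈ D ∧ ∀ y ∈ G, ¬ r y x := by
  refine ⟨{x | hr.fix (fun x ih => x ∈ D ∧ ∀ y (h : r y x), ¬ ih y h) x}, fun x => ?_⟩
  rw [Set.mem_ofPred_eq, hr.fix_eq]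
  exact and_congr_right fun _ => forall_congr' fun _ => imp_not_comm

theorem mk_sym2_prod_le {X C : Type u} {μ : Cardinal.{u}} (hμ : ℵ₀ ≤ μ) (hX : #X ≤ μ)
    (hC : #C ≤ μ) : #(Sym2 X × C) ≤ μ := by
  have hSym : #(Sym2 X) ≤ #(X × X) :=
    mk_le_of_surjective (f := Function.uncurry Sym2.mk) fun s => by
      induction s with | h x y => exact ⟨(x, y), rfl⟩
  simp only [mk_prod, lift_id] at hSym ⊢
  exact mul_le_of_le hμ (hSym.trans (mul_le_of_le hμ hX hX)) hC

/-- The colours `c` for which there is a monochromatic 2-path on `x, y` coloured `c`. -/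
def pathColors {A B C : Type*} (F : A → B → C) (x y : A) : Set C :=
  {c | ∃ b, F x b = c ∧ F y b = c}

variable {A C : Type u} {T : Type*} [LinearOrder T]

/-- The level of a demand `({x, y}, c)`, for points ranked by `t`: the larger of the two ranks. -/
def level (t : A → T) (d : Sym2 A × C) : T :=
  (d.1.map t).sup

theorem le_level (t : A → T) {d : Sym2 A × C} {x : A} (hx : x ∈ d.1) : t x ≤ level t d := by
  obtain ⟨⟨y, z⟩, c⟩ := d
  rcases Sym2.mem_iff.1 hx with rfl | rfl
  exacts [le_max_left _ _, le_max_right _ _]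

theorem exists_level_eq (t : A → T) (d : Sym2 A × C) : ∃ x ∈ d.1, level t d = t x := by
  obtain ⟨⟨y, z⟩, c⟩ := d
  rcases max_choice (t y) (t z) with h | h
  exacts [⟨y, Sym2.mem_mk_left y z, h⟩, ⟨z, Sym2.mem_mk_right y z, h⟩]

theorem mk_level_lt_le [Infinite C] {t : A → T} {a : A} (ha : #{x | t x ≤ t a} ≤ #C) :
    #{d : Sym2 A × C | level t d < t a} ≤ #C := by
  let val : {x | t x ≤ t a} → A := Subtype.val
  have hsub : {d : Sym2 A × C | level t d < t a} ⊆ Set.range (Prod.map (Sym2.map val) id) := by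
    rintro ⟨⟨x, y⟩, c⟩ hd
    obtain ⟨hx, hy⟩ := max_lt_iff.1 hd
    exact ⟨(s(⟨x, hx.le⟩, ⟨y, hy.le⟩), c), rfl⟩
  exact (mk_le_mk_of_subset hsub).trans
    (mk_range_le.trans (mk_sym2_prod_le (aleph0_le_mk C) ha le_rfl))

/-- A colouring of points against demands in which each column meets its own demand and which has no
coincidences except those forced by this. The rank `t` decides whether a point is treated by the
column or by the row: the point `x` is old for the demand `d` if `t x ≤ level t d`, and new
otherwise. -/
structure IsDemandColoring (t : A → T) (a₀ : A) (F : A → Sym2 A × C → C) : Prop where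
  eq_of_mem : ∀ {x d}, x ∈ d.1 → F x d = d.2
  mem_of_eq : ∀ {x y d}, x ≠ y → t x ≤ level t d → t y ≤ level t d → F x d = F y d →
    x ∈ d.1 ∧ y ∈ d.1
  injOn : ∀ x, Set.InjOn (F x) {d | level t d < t x}
  ne_base : ∀ {x d}, level t d < t x → F x d ≠ F a₀ d

theorem exists_isDemandColoring [Infinite C] {t : A → T} (ht : ∀ a, #{x | t x ≤ t a} ≤ #C) {a₀ : A}
    (ha₀ : ∀ x, t a₀ ≤ t x) : ∃ F : A → Sym2 A × C → C, IsDemandColoring t a₀ F := by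
  have hold (d : Sym2 A × C) : #{x | t x ≤ level t d} ≤ #C := by
    obtain ⟨x, -, hx⟩ := exists_level_eq t d
    exact hx ▸ ht x
  choose column column_eq mem_of_column_eq using fun d : Sym2 A × C =>
    exists_eqOn_const_and_mem_of_eq (hold d) d.1 d.2
  choose row row_injOn row_ne using fun x =>
    exists_injOn_forall_ne (mk_level_lt_le (ht x)) fun d => column d a₀
  let F x d := if t x ≤ level t d then column d x else row x d
  have F_old {x d} (h : t x ≤ level t d) : F x d = column d x := if_pos h
  have F_new {x d} (h : level t d < t x) : F x d = row x d := if_neg h.not_ge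
  refine ⟨F, fun {x d} hx => ?_, fun {x y d} hxy hx hy h => ?_, fun x => ?_, fun {x d} hx => ?_⟩
  · rw [F_old (le_level t hx), column_eq d x hx]
  · rw [F_old hx, F_old hy] at h
    exact mem_of_column_eq d x hx y hy hxy h
  · exact (row_injOn x).congr fun d hd => (F_new hd).symm
  · obtain ⟨y, -, hy⟩ := exists_level_eq t d
    rw [F_new hx, F_old (hy ▸ ha₀ y)]
    exact row_ne x d

/-- The demand `d` is already met by the column of the demand `d'` of smaller level, so that a
column for `d` would complete a monochromatic `K_{2,2}`. -/
def Preempts (t : A → T) (F : A → Sym2 A × C → C) (d' d : Sym2 A × C) : Prop :=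
  level t d' < level t d ∧ ∀ x ∈ d.1, F x d' = d.2

theorem wellFounded_preempts [WellFoundedLT T] (t : A → T) (F : A → Sym2 A × C → C) :
    WellFounded (Preempts t F) :=
  Subrelation.wf And.left (InvImage.wf (level t) wellFounded_lt)

/-- The demands `({x, y}, c)` with `x ≠ y` and `c ∈ P {x, y}`, where `P` prescribes the colours of
the 2-paths on each pair. -/
def demands (P : Sym2 A → Set C) : Set (Sym2 A × C) :=
  {d | ¬ d.1.IsDiag ∧ d.2 ∈ P d.1}

namespace IsDemandColoring

variable {t : A → T} {a₀ : A} {F : A → Sym2 A × C → C}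

theorem eq_mk (hF : IsDemandColoring t a₀ F) {x y : A} {d : Sym2 A × C} (hxy : x ≠ y)
    (hx : t x ≤ level t d) (hy : t y ≤ level t d) (h : F x d = F y d) : d = (s(x, y), F x d) := by
  have hmem := hF.mem_of_eq hxy hx hy h
  exact Prod.ext ((Sym2.mem_and_mem_iff hxy).1 hmem) (hF.eq_of_mem hmem.1).symm

theorem le_level_of_eq (hF : IsDemandColoring t a₀ F) {x : A} {d d' : Sym2 A × C} (hne : d ≠ d')
    (hle : level t d ≤ level t d') (h : F x d = F x d') : t x ≤ level t d' := by
  by_contra! hlt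
  exact hne (hF.injOn x (hle.trans_lt hlt) hlt h)

theorem eq_of_mono (hF : IsDemandColoring t a₀ F) {x y : A} {d d' : Sym2 A × C} (hxy : x ≠ y)
    (hle : level t d ≤ level t d') (hd : ¬ Preempts t F d d') (hx : F x d = F x d')
    (hy : F y d = F y d') (h : F x d = F y d) : d = d' := by
  by_contra hne
  have hx_old := hF.le_level_of_eq hne hle hx
  have hy_old := hF.le_level_of_eq hne hle hy
  have hd' : d' = (s(x, y), F x d') := hF.eq_mk hxy hx_old hy_old (by rw [← hx, h, hy])
  rcases hle.lt_or_eq with hlt | heq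
  · refine hd ⟨hlt, ?_⟩
    rw [hd']
    simp [← hx, ← h]
  · have hd_eq : d = (s(x, y), F x d) := hF.eq_mk hxy (heq ▸ hx_old) (heq ▸ hy_old) h
    exact hne (by rw [hd_eq, hd', hx])

theorem noMonoK22 (hF : IsDemandColoring t a₀ F) {G : Set (Sym2 A × C)}
    (hG : ∀ d ∈ G, ∀ d' ∈ G, ¬ Preempts t F d' d) : NoMonoK22 fun x (d : G) => F x d := by
  rintro ⟨x, y, ⟨d, hd⟩, ⟨d', hd'⟩, hxy, hne, hx, h, hyd'⟩
  dsimp only at hx h hyd'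
  have hy : F y d = F y d' := h.symm.trans hyd'
  rw [ne_eq, Subtype.mk.injEq] at hne
  rcases le_total (level t d) (level t d') with hle | hle
  · exact hne (hF.eq_of_mono hxy hle (hG d' hd' d hd) hx hy h)
  · exact hne (hF.eq_of_mono hxy hle (hG d hd d' hd') hx.symm hy.symm (hx.symm.trans hyd')).symm

theorem eq_mk_of_le_base_or_mem (hF : IsDemandColoring t a₀ F) (ha₀ : ∀ x, t a₀ ≤ t x) {x y : A}
    {d : Sym2 A × C} (hxy : x ≠ y) (hbase : (∀ z ∈ s(x, y), t z ≤ t a₀) ∨ a₀ ∈ s(x, y))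
    (h : F x d = F y d) : d = (s(x, y), F x d) := by
  have hbase_old : t a₀ ≤ level t d := by
    obtain ⟨z, -, hz⟩ := exists_level_eq t d
    exact hz ▸ ha₀ z
  have old_of_eq {z : A} (hz : F z d = F a₀ d) : t z ≤ level t d := by
    by_contra! hlt
    exact hF.ne_base hlt hz
  rcases hbase with hle | hmem
  · exact hF.eq_mk hxy ((hle x (Sym2.mem_mk_left x y)).trans hbase_old)
      ((hle y (Sym2.mem_mk_right x y)).trans hbase_old) h
  · rcases Sym2.mem_iff.1 hmem with rfl | rfl
    · exact hF.eq_mk hxy hbase_old (old_of_eq h.symm) h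
    · exact hF.eq_mk hxy (old_of_eq h) hbase_old h

theorem pathColors_eq (hF : IsDemandColoring t a₀ F) (ha₀ : ∀ x, t a₀ ≤ t x) {P : Sym2 A → Set C}
    (hP : ∀ s, P s ≠ Set.univ → (∀ x ∈ s, t x ≤ t a₀) ∨ a₀ ∈ s) {G : Set (Sym2 A × C)}
    (hG : ∀ d, d ∈ G ↔ d ∈ demands P ∧ ∀ d' ∈ G, ¬ Preempts t F d' d) {x y : A} (hxy : x ≠ y) :
    pathColors (fun x (d : G) => F x d) x y = P s(x, y) := by
  ext c
  constructor
  · rintro ⟨⟨d, hd⟩, hx, hy⟩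
    by_contra hc
    have hbase := hP s(x, y) fun huniv => hc (huniv ▸ Set.mem_univ c)
    obtain rfl : d = (s(x, y), c) :=
      (hF.eq_mk_of_le_base_or_mem ha₀ hxy hbase (hx.trans hy.symm)).trans (congrArg _ hx)
    exact hc ((hG _).1 hd).1.2
  · intro hc
    by_cases hd : (s(x, y), c) ∈ G
    · exact ⟨⟨_, hd⟩, hF.eq_of_mem (Sym2.mem_mk_left x y), hF.eq_of_mem (Sym2.mem_mk_right x y)⟩
    · have hpre : ∃ d' ∈ G, Preempts t F d' (s(x, y), c) := by
        by_contra! hnot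
        exact hd ((hG _).2 ⟨⟨by simpa using hxy, hc⟩, hnot⟩)
      obtain ⟨d', hd', -, hall⟩ := hpre
      exact ⟨⟨d', hd'⟩, hall x (Sym2.mem_mk_left x y), hall y (Sym2.mem_mk_right x y)⟩

theorem not_preempts_base (hF : IsDemandColoring t a₀ F) (ha₀ : ∀ x, t a₀ ≤ t x) (y : A) (c : C)
    (d : Sym2 A × C) : ¬ Preempts t F d (s(a₀, y), c) := by
  rintro ⟨hlt, hall⟩
  have hy : level t d < t y := hlt.trans_eq (max_eq_right (ha₀ y))
  exact hF.ne_base hy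
    ((hall y (Sym2.mem_mk_right a₀ y)).trans (hall a₀ (Sym2.mem_mk_left a₀ y)).symm)

theorem mk_nonempty_le_mk (hF : IsDemandColoring t a₀ F) (ha₀ : ∀ x, t a₀ ≤ t x)
    {P : Sym2 A → Set C} {G : Set (Sym2 A × C)}
    (hG : ∀ d, d ∈ demands P → (∀ d' ∈ G, ¬ Preempts t F d' d) → d ∈ G) :
    #{y | y ≠ a₀ ∧ (P s(a₀, y)).Nonempty} ≤ #G := by
  choose c hc using fun y : {y | y ≠ a₀ ∧ (P s(a₀, y)).Nonempty} => y.2.2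
  have hmem (y) : (s(a₀, y.1), c y) ∈ G :=
    hG _ ⟨by simpa using y.2.1.symm, hc y⟩ fun d _ => hF.not_preempts_base ha₀ y (c y) d
  refine mk_le_of_injective (f := fun y => (⟨_, hmem y⟩ : G)) fun y y' h => ?_
  rw [Subtype.mk.injEq, Prod.mk.injEq] at h
  exact Subtype.ext (Sym2.congr_right.1 h.1)

end IsDemandColoring

theorem exists_noMonoK22_pathColors_eq [WellFoundedLT T] [Infinite C] (hCA : #C ≤ #A) {t : A → T}
    (ht : ∀ a, #{x | t x ≤ t a} ≤ #C) {a₀ : A} (ha₀ : ∀ x, t a₀ ≤ t x) {P : Sym2 A → Set C}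
    (hP : ∀ s, P s ≠ Set.univ → (∀ x ∈ s, t x ≤ t a₀) ∨ a₀ ∈ s)
    (hPA : #A ≤ #{y | y ≠ a₀ ∧ (P s(a₀, y)).Nonempty}) :
    ∃ (B : Type u) (F : A → B → C), #B = #A ∧ NoMonoK22 F ∧
      ∀ x y, x ≠ y → pathColors F x y = P s(x, y) := by
  obtain ⟨F, hF⟩ := exists_isDemandColoring ht ha₀
  obtain ⟨G, hG⟩ := exists_kernel_of_wellFounded (wellFounded_preempts t F) (demands P)
  have hGA : #G ≤ #A := (mk_set_le G).trans
    (mk_sym2_prod_le ((aleph0_le_mk C).trans hCA) le_rfl hCA)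
  have hAG : #A ≤ #G :=
    hPA.trans (hF.mk_nonempty_le_mk ha₀ fun d hd hpre => (hG d).2 ⟨hd, hpre⟩)
  exact ⟨G, fun x d => F x d, hGA.antisymm hAG, hF.noMonoK22 fun d hd => ((hG d).1 hd).2,
    fun x y hxy => hF.pathColors_eq ha₀ hP hG hxy⟩

/-- The prescription with value `Q i` at the distinguished pair `p i` and without restriction at all
other pairs. -/
def prescription {ι : Type*} (p : ι → Sym2 A) (Q : ι → Set C) (s : Sym2 A) : Set C :=
  {c | ∀ i, p i = s → c ∈ Q i}

theorem prescription_apply {ι : Type*} {p : ι → Sym2 A} (hp : Function.Injective p)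
    (Q : ι → Set C) (i : ι) : prescription p Q (p i) = Q i :=
  Set.ext fun _ => ⟨fun h => h i rfl, fun h _ hj => hp hj ▸ h⟩

theorem prescription_eq_univ {ι : Type*} {p : ι → Sym2 A} (Q : ι → Set C) {s : Sym2 A}
    (hs : ∀ i, p i ≠ s) : prescription p Q s = Set.univ :=
  Set.eq_univ_of_forall fun _ i hi => absurd hi (hs i)

theorem mk_sum_prod_bool_le {X Y : Type u} {μ : Cardinal.{u}} (hμ : ℵ₀ ≤ μ) (hX : #X ≤ μ)
    (hY : #Y ≤ μ) : #((X ⊕ Y) × Bool) ≤ μ := by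
  simp only [mk_prod, mk_sum, mk_bool, lift_id, lift_uzero, lift_ofNat]
  exact mul_le_of_le hμ (add_le_of_le hμ hX hY) (ofNat_lt_aleph0.le.trans hμ)

theorem mk_sum_prod_bool_eq {X Y : Type u} [Infinite Y] (h : #X ≤ #Y) :
    #((X ⊕ Y) × Bool) = #Y :=
  (mk_sum_prod_bool_le (aleph0_le_mk Y) h le_rfl).antisymm
    (mk_le_of_injective (f := fun y => (.inr y, true)) fun _ _ h => by simpa using h)

theorem mk_compl_range_eq {X : Type*} {Y : Type u} {f : X → A} {g : Y → A}
    (hg : Function.Injective g) (hfg : ∀ x y, f x ≠ g y) (hA : #A ≤ #Y) : #↥((Set.range f)ᶜ) = #A :=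
  (mk_set_le _).antisymm (hA.trans (mk_le_of_injective
    (f := fun y => ⟨g y, fun ⟨x, hx⟩ => hfg x y hx⟩)
    fun _ _ h => hg (congrArg Subtype.val h)))

/-- The rank on the vertices `(K ⊕ W) × Bool`, the two copies of `K` at the bottom rank `w₀`.
Here `(inl k, true)` and `(inl k, false)` stand for the points `l₁` and `l₂`, `(inr w, true)` for
the points `m`, and `(inr w, false)` for further points in no distinguished pair. -/
def vertexRank {K W : Type*} (w₀ : W) (x : (K ⊕ W) × Bool) : W :=
  x.1.elim (fun _ => w₀) id

/-- The pairs of vertices with prescribed colours: `{l₁ k, l₂ k}` and `{m w₀, m w}` for `w ≠ w₀`. -/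
def distinguishedPair {K W : Type*} (w₀ : W) : K ⊕ {w : W // w ≠ w₀} → Sym2 ((K ⊕ W) × Bool) :=
  Sum.elim (fun k => s((.inl k, true), (.inl k, false)))
    fun w => s((.inr w₀, true), (.inr w.1, true))

theorem distinguishedPair_injective {K W : Type*} (w₀ : W) :
    Function.Injective (distinguishedPair (K := K) w₀) := by
  rintro (k | ⟨w, hw⟩) (k' | ⟨w', hw'⟩) h <;> simp_all [distinguishedPair]

theorem mk_vertexRank_le {K W : Type u} [LinearOrder W] {μ : Cardinal.{u}} (hμ : ℵ₀ ≤ μ)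
    (hK : #K ≤ μ) (w₀ : W) {w : W} (hw : #(Set.Iic w) ≤ μ) :
    #{x : (K ⊕ W) × Bool | vertexRank w₀ x ≤ w} ≤ μ := by
  let val : Set.Iic w → W := Subtype.val
  have hsub : {x : (K ⊕ W) × Bool | vertexRank w₀ x ≤ w} ⊆
      Set.range (Prod.map (Sum.map id val) id) := by
    rintro ⟨k | v, b⟩ hx
    · exact ⟨(.inl k, b), rfl⟩
    · exact ⟨(.inr ⟨v, hx⟩, b), rfl⟩
  exact (mk_le_mk_of_subset hsub).trans (mk_range_le.trans (mk_sum_prod_bool_le hμ hK hw))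

theorem vertexRank_le_or_mem_distinguishedPair {K W : Type*} [LinearOrder W] (w₀ : W)
    (i : K ⊕ {w : W // w ≠ w₀}) :
    (∀ x ∈ distinguishedPair w₀ i, vertexRank w₀ x ≤ w₀) ∨
      (.inr w₀, true) ∈ distinguishedPair w₀ i := by
  rcases i with k | w <;> simp [distinguishedPair, vertexRank]

theorem exists_noMonoK22_pathColors_distinguishedPair [Infinite C] {K W : Type u} [LinearOrder W]
    [WellFoundedLT W] (hK : #K ≤ #C) (hW : ∀ w : W, #(Set.Iic w) ≤ #C) (hCW : #C ≤ #W) {w₀ : W}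
    (hw₀ : ∀ w, w₀ ≤ w) (L : K → Set C) (S : W → Set C) :
    ∃ (B : Type u) (F : (K ⊕ W) × Bool → B → C), #B = #W ∧ NoMonoK22 F ∧
      (∀ k, pathColors F (.inl k, true) (.inl k, false) = L k) ∧
      (∀ w, w ≠ w₀ → pathColors F (.inr w₀, true) (.inr w, true) = S w) ∧
      ∀ x y, x ≠ y → (∀ i, distinguishedPair w₀ i ≠ s(x, y)) → pathColors F x y = Set.univ := by
  have : Infinite W := infinite_iff.2 ((aleph0_le_mk C).trans hCW)
  have hA : #((K ⊕ W) × Bool) = #W := mk_sum_prod_bool_eq (hK.trans hCW)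
  let Q : K ⊕ {w : W // w ≠ w₀} → Set C := Sum.elim L fun w => S w
  let P := prescription (distinguishedPair w₀) Q
  have hPp (i) : P (distinguishedPair w₀ i) = Q i :=
    prescription_apply (distinguishedPair_injective w₀) Q i
  have hP (s) (hs : P s ≠ Set.univ) :
      (∀ x ∈ s, vertexRank w₀ x ≤ w₀) ∨ (.inr w₀, true) ∈ s := by
    obtain ⟨i, rfl⟩ : ∃ i, distinguishedPair w₀ i = s := by
      by_contra! hne
      exact hs (prescription_eq_univ Q hne)
    exact vertexRank_le_or_mem_distinguishedPair w₀ i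
  have hPA : #((K ⊕ W) × Bool) ≤
      #{y | y ≠ (.inr w₀, true) ∧ (P s((.inr w₀, true), y)).Nonempty} := by
    have hfree (w : W) : P s((.inr w₀, true), (.inr w, false)) = Set.univ :=
      prescription_eq_univ Q (by rintro (k | v) <;> simp [distinguishedPair])
    exact hA.trans_le (mk_le_of_injective
      (f := fun w => ⟨(.inr w, false), by simp, by simp [hfree]⟩) fun _ _ h => by simpa using h)
  obtain ⟨B, F, hB, hF, hpath⟩ := exists_noMonoK22_pathColors_eq (hCW.trans_eq hA.symm)
    (fun x => mk_vertexRank_le (aleph0_le_mk C) hK w₀ (hW (vertexRank w₀ x)))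
    (a₀ := (.inr w₀, true)) (fun x => hw₀ (vertexRank w₀ x)) hP hPA
  refine ⟨B, F, hB.trans hA, hF, fun k => ?_, fun w hw => ?_, fun x y hxy hne => ?_⟩
  · exact (hpath _ _ (by simp)).trans (hPp (.inl k))
  · exact (hpath _ _ (by simpa using hw.symm)).trans (hPp (.inr ⟨w, hw⟩))
  · exact (hpath x y hxy).trans (prescription_eq_univ Q hne)

theorem mk_Iic_toType_ord_succ_le {κ : Cardinal.{u}} (hκ : ℵ₀ ≤ κ)
    (w : (Order.succ κ).ord.ToType) : #(Set.Iic w) ≤ κ := by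
  rw [← Set.Iio_insert]
  have hIio : #(Set.Iio w) < Order.succ κ := by
    simpa only [mk_ord_toType] using mk_Iio_lt w (by simp)
  exact mk_insert_le.trans (add_le_of_le hκ (Order.lt_succ_iff.1 hIio) (one_le_aleph0.trans hκ))

end Construction

theorem stmt16_general (κ : Cardinal.{u}) (hκ : Cardinal.aleph0 ≤ κ) {C : Type u}
    (hκC : κ ≤ Cardinal.mk C) (hCκ : Cardinal.mk C ≤ Order.succ κ)
    (L : {o : Ordinal.{u} // o < κ.ord} → Set C)
    (S : {o : Ordinal.{u} // o < (Order.succ κ).ord} → Set C) :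
    ∃ (A B : Type u)
      (l₁ l₂ : {o : Ordinal.{u} // o < κ.ord} → A)
      (m : {o : Ordinal.{u} // o < (Order.succ κ).ord} → A)
      (F : A → B → C),
      Cardinal.mk A = Order.succ κ ∧ Cardinal.mk B = Order.succ κ ∧
      Function.Injective l₁ ∧ Function.Injective l₂ ∧
      (∀ α β, l₁ α ≠ l₂ β) ∧
      Function.Injective m ∧
      (∀ γ α, m γ ≠ l₁ α ∧ m γ ≠ l₂ α) ∧
      Cardinal.mk ↥((Set.range m)ᶜ) = Order.succ κ ∧
      NoMonoK22 F ∧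
      (∀ α c, (∃ b : B, F (l₁ α) b = c ∧ F (l₂ α) b = c) ↔ c ∈ L α) ∧
      (∀ α, 0 < α.1 → ∀ c : C,
        (∃ b : B, F (m (ordZero κ)) b = c ∧ F (m α) b = c) ↔ c ∈ S α) ∧
      (∀ a a' : A, a ≠ a' →
        (∀ α, ({a, a'} : Set A) ≠ {l₁ α, l₂ α}) →
        (∀ α, 0 < α.1 → ({a, a'} : Set A) ≠ {m (ordZero κ), m α}) →
        ∀ c : C, ∃ b : B, F a b = c ∧ F a' b = c) := by
  have : Infinite C := Cardinal.infinite_iff.2 (hκ.trans hκC)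
  let K := κ.ord.ToType
  let W := (Order.succ κ).ord.ToType
  let eK : {o : Ordinal.{u} // o < κ.ord} ≃ K := Ordinal.ToType.mk.toEquiv
  let eW : {o : Ordinal.{u} // o < (Order.succ κ).ord} ≃o W := Ordinal.ToType.mk
  have hK : Cardinal.mk K = κ := Cardinal.mk_ord_toType κ
  have hW : Cardinal.mk W = Order.succ κ := Cardinal.mk_ord_toType (Order.succ κ)
  have : Infinite W := Cardinal.infinite_iff.2 (hW ▸ hκ.trans (Order.le_succ κ))
  have hA : Cardinal.mk ((K ⊕ W) × Bool) = Cardinal.mk W :=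
    mk_sum_prod_bool_eq (hK.trans_le (hκC.trans (hCκ.trans_eq hW.symm)))
  let w₀ := eW (ordZero κ)
  have hw₀ (w : W) : w₀ ≤ w := (eW.le_symm_apply (x := ordZero κ)).1 (zero_le (a := (eW.symm w).1))
  have ne_w₀ {α} : eW α ≠ w₀ ↔ 0 < α.1 := by
    rw [pos_iff_ne_zero, eW.injective.ne_iff, ne_eq, Subtype.ext_iff]
    rfl
  obtain ⟨B, F, hB, hF, hL, hS, hfree⟩ := exists_noMonoK22_pathColors_distinguishedPair
    (hK.trans_le hκC) (fun w => (mk_Iic_toType_ord_succ_le hκ w).trans hκC) (hCκ.trans_eq hW.symm)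
    hw₀ (L ∘ eK.symm) (S ∘ eW.symm)
  refine ⟨(K ⊕ W) × Bool, B, fun α => (.inl (eK α), true), fun α => (.inl (eK α), false),
    fun α => (.inr (eW α), true), F, hA.trans hW, hB.trans hW, fun _ _ h => by simpa using h,
    fun _ _ h => by simpa using h, by simp, fun _ _ h => by simpa using h, by simp, ?_, hF,
    fun α c => ?_, fun α hα c => ?_, fun a a' hne hl hm c => ?_⟩
  · exact (mk_compl_range_eq (f := fun α => (.inr (eW α), true)) (g := fun w => (.inr w, false))
      (fun _ _ h => by simpa using h) (by simp) hA.le).trans (hA.trans hW)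
  · simpa [pathColors] using Set.ext_iff.1 (hL (eK α)) c
  · simpa [pathColors, w₀] using Set.ext_iff.1 (hS (eW α) (ne_w₀.2 hα)) c
  · refine (hfree a a' hne ?_).ge (Set.mem_univ c)
    rintro (k | ⟨w, hw⟩) h
    · refine hl (eK.symm k) (Set.pair_eq_pair_iff.2 (Sym2.eq_iff.1 ?_))
      simpa [distinguishedPair] using h.symm
    · refine hm (eW.symm w) (ne_w₀.1 (by simpa using hw))
        (Set.pair_eq_pair_iff.2 (Sym2.eq_iff.1 ?_))
      simpa [distinguishedPair] using h.symm

theorem stmt16 (κ : Cardinal.{u}) (hκ : Cardinal.aleph0 ≤ κ) {C : Type u}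
    (hC : Cardinal.mk C = κ) (C₀ : Set C)
    (hC₀ : Cardinal.mk C₀ = κ) (hC₀c : Cardinal.mk ↥(C₀ᶜ) = κ)
    (S : {o : Ordinal.{u} // o < (Order.succ κ).ord} → Set C)
    (hSsub : ∀ α, 0 < α.1 → S α ⊆ C₀)
    (hSdist : ∀ α β, 0 < α.1 → 0 < β.1 → α ≠ β → S α ≠ S β)
    (hScard : ∀ α, 0 < α.1 → Cardinal.mk (S α) = κ)
    (hScardc : ∀ α, 0 < α.1 → Cardinal.mk ↥(C₀ \ S α) = κ) :
    ∃ (A B : Type u)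
      (e : {o : Ordinal.{u} // o < κ.ord} ≃ C₀)
      (l₁ l₂ : {o : Ordinal.{u} // o < κ.ord} → A)
      (m : {o : Ordinal.{u} // o < (Order.succ κ).ord} → A)
      (F : A → B → C),
      Cardinal.mk A = Order.succ κ ∧ Cardinal.mk B = Order.succ κ ∧
      -- the points `l₁ α`, `l₂ α` (over all `α < κ`) are pairwise distinct
      Function.Injective l₁ ∧ Function.Injective l₂ ∧
      (∀ α β, l₁ α ≠ l₂ β) ∧
      -- `m` is injective with range disjoint from the `l`-points and
      -- co-large in `A`
      Function.Injective m ∧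
      (∀ γ α, m γ ≠ l₁ α ∧ m γ ≠ l₂ α) ∧
      Cardinal.mk ↥((Set.range m)ᶜ) = Order.succ κ ∧
      -- (i)
      NoMonoK22 F ∧
      -- (ii)
      (∀ (α : {o : Ordinal.{u} // o < κ.ord}) (c : C),
        (∃ b : B, F (l₁ α) b = c ∧ F (l₂ α) b = c) ↔
          (c ∉ C₀ ∨ ∃ β, α < β ∧ c = (e β : C))) ∧
      -- (iii)
      (∀ α, 0 < α.1 → ∀ c : C,
        (∃ b : B, F (m (ordZero κ)) b = c ∧ F (m α) b = c) ↔ c ∈ S α) ∧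
      -- (iv)
      (∀ a a' : A, a ≠ a' →
        (∀ α, ({a, a'} : Set A) ≠ {l₁ α, l₂ α}) →
        (∀ α, 0 < α.1 → ({a, a'} : Set A) ≠ {m (ordZero κ), m α}) →
        ∀ c : C, ∃ b : B, F a b = c ∧ F a' b = c) := by
  obtain ⟨e⟩ : Nonempty ({o : Ordinal.{u} // o < κ.ord} ≃ C₀) :=
    ⟨Ordinal.ToType.mk.toEquiv.trans
      (Cardinal.eq.1 ((Cardinal.mk_ord_toType κ).trans hC₀.symm)).some⟩
  obtain ⟨A, B, h⟩ := stmt16_general κ hκ hC.ge (hC.trans_le (Order.le_succ κ))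
    (fun α => {c | c ∉ C₀ ∨ ∃ β, α < β ∧ c = (e β : C)}) S
  exact ⟨A, B, e, h⟩
end

section
/- For every infinite cardinal κ, there exist types A, B, C with #A = #B = κ⁺ and #C = κ, an index type I with #I = 2^(κ⁺), and a family of functions F_i : A → B → C (i ∈ I) such that: each F_i satisfies (*) (no monochromatic K_{2,2}) and is C-maximal (both A-inextensible and B-inextensible); and for all i ≠ j in I, F_i and F_j are non-isomorphic, i.e., there are no bijections σ : A ≃ A, τ : B ≃ B, ρ : C ≃ C with ρ (F_i a b) = F_j (σ a) (τ b) for all a ∈ A and b ∈ B. In particular there are 2^(κ⁺) pairwise non-isomorphic C-maximal colorings of the complete bipartite graph on two sets of size κ⁺ by κ colors with no monochromatic K_{2,2}. -/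
universe u

/-! Call a color `c` missing for a pair of vertices `x ≠ y` of `A` if `x` and `y` have no common
neighbor in color `c`. The number of missing colors of a pair is invariant under isomorphism.

Well-order a set of size `κ⁺` in type `κ⁺`, and color the pairs `s, t` with `t ≤ s` by recursion
on `s`. Stage `s` handles a triple `(x, y, c)` given in advance: if `x` and `y` do not yet have
a common neighbor in color `c`, and `c` is not prescribed to be missing for them, then `s` becomes
one. All other colors given at stage `s` are distinct, which is possible since there are only `κ`
vertices below `s`. So no stage closes a monochromatic `K_{2,2}`, while every color that is not
prescribed to be missing is eventually realized. Among `κ⁺` vertices without missing colors, any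
`κ`-coloring repeats a value, whence maximality.

So any bounded symmetric weight that vanishes at `κ⁺` vertices counts the missing colors of some
maximal coloring. Finally, each subset of the well-order `κ⁺`, together with the order, can be
coded by a weight; well-orders being rigid, isomorphic weights code the same subset.
-/

open Cardinal Set Function

section MissingColors

variable {A B C : Type*}

/-- The colors `c` such that `x` and `y` have no common neighbor in color `c`. The number of
these is the isomorphism invariant that separates the colorings. -/
def missingColors (F : A → B → C) (x y : A) : Set C :=
  {c | ∀ b, ¬(F x b = c ∧ F y b = c)}

theorem missingColors_equiv_apply {F G : A → B → C} {σ : A ≃ A} {τ : B ≃ B} {ρ : C ≃ C}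
    (h : ∀ a b, ρ (F a b) = G (σ a) (τ b)) (x y : A) :
    missingColors G (σ x) (σ y) = ρ '' missingColors F x y := by
  ext c
  rw [ρ.image_eq_preimage_symm]
  simp only [missingColors, mem_ofPred_eq, mem_preimage]
  rw [← τ.forall_congr_right]
  simp only [← h, Equiv.eq_symm_apply]

end MissingColors

section SymmetricColorings

variable {L C : Type*} {F : L → L → C}

theorem BInextensible.aInextensible_of_symm (hF : ∀ s t, F s t = F t s) (h : BInextensible F) :
    AInextensible F := by
  intro g
  obtain ⟨x, y, hxy, b, hb⟩ := h g
  exact ⟨x, y, hxy, b, by simpa only [hF b] using hb⟩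

variable [LinearOrder L]

theorem noMonoK22_of_symm (hF : ∀ s t, F s t = F t s)
    (h : ∀ s, ∀ x ≤ s, ∀ y ≤ s, x ≠ y → F s x = F s y →
      ∀ v < s, ¬(F v x = F s x ∧ F v y = F s x)) :
    NoMonoK22 F := by
  rintro ⟨a₁, a₂, b₁, b₂, ha, hb, h₁₂, h₂₁, h₂₂⟩
  wlog ha' : a₁ < a₂ generalizing a₁ a₂
  · exact this a₂ a₁ ha.symm (h₂₁.symm.trans h₂₂) h₂₁.symm (h₂₁.symm.trans h₁₂)
      (lt_of_le_of_ne (not_lt.1 ha') ha.symm)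
  wlog hb' : b₁ < b₂ generalizing b₁ b₂
  · exact this b₂ b₁ hb.symm h₁₂.symm (h₁₂.symm.trans h₂₂) (h₁₂.symm.trans h₂₁)
      (lt_of_le_of_ne (not_lt.1 hb') hb.symm)
  rcases le_total b₂ a₂ with hle | hle
  · exact h a₂ b₁ (hb'.le.trans hle) b₂ hle hb (h₂₁.symm.trans h₂₂) a₁ ha'
      ⟨h₂₁, h₁₂.symm.trans h₂₁⟩
  · rw [hF a₁ b₁] at h₁₂ h₂₁ h₂₂
    rw [hF a₁ b₂] at h₁₂
    rw [hF a₂ b₁] at h₂₁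
    rw [hF a₂ b₂] at h₂₂
    exact h b₂ a₁ (ha'.le.trans hle) a₂ hle ha (h₁₂.symm.trans h₂₂) b₁ hb'
      ⟨h₁₂, h₂₁.symm.trans h₁₂⟩

theorem exists_symm_eq_of_local [WellFoundedLT L] [Nonempty C] (Φ : L → (L → L → C) → L → C)
    (hΦ : ∀ s G G', (∀ v < s, ∀ w < s, G v w = G' v w) → Φ s G = Φ s G') :
    ∃ F : L → L → C, (∀ s t, F s t = F t s) ∧ ∀ s, ∀ t ≤ s, F s t = Φ s F t := by
  classical
  let step (s : L) (row : ∀ v < s, L → C) : L → C :=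
    Φ s fun v w ↦ if h : max v w < s then row (max v w) h (min v w) else Classical.arbitrary C
  let row : L → L → C := wellFounded_lt.fix step
  have row_eq (s : L) : row s = step s fun v _ ↦ row v := wellFounded_lt.fix_eq step s
  refine ⟨fun s t ↦ row (max s t) (min s t), fun s t ↦ by simp only [max_comm, min_comm], ?_⟩
  intro s t hts
  simp only [max_eq_left hts, min_eq_right hts]
  rw [row_eq]
  refine congrFun (hΦ s _ _ fun v hv w hw ↦ ?_) t
  rw [dif_pos (max_lt hv hw)]

end SymmetricColorings

section Greedy

variable {L C : Type*} [LinearOrder L]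

/-- The request to give `x` and `y` a common neighbor in color `c` is to be honored at stage `s`
of the greedy construction, where `F` is the coloring of the pairs below `s` and `M x y` is the set
of colors prescribed to be missing for `x` and `y`. Vertices with prescribed missing colors honor
no requests. -/
def IsPending (M : L → L → Set C) (F : L → L → C) (s x y : L) (c : C) : Prop :=
  (∀ z, M s z = ∅) ∧ x < s ∧ y < s ∧ c ∉ M x y ∧ ∀ v < s, ¬(F v x = c ∧ F v y = c)

open Classical in
/-- The colors of the pairs `s, t` with `t ≤ s`, as chosen at stage `s` of the greedy construction:
`req s` is the request handled there, and `e c s` supplies the other colors, `c` being the color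
requested. -/
noncomputable def greedyRow (M : L → L → Set C) (e : C → L → L → C) (req : L → L × L × C) (s : L)
    (F : L → L → C) (t : L) : C :=
  match req s with
  | (x, y, c) => if IsPending M F s x y c ∧ (t = x ∨ t = y) then c else e c s t

/-- `F` is the symmetric coloring produced by the greedy construction. -/
structure IsGreedy (M : L → L → Set C) (e : C → L → L → C) (req : L → L × L × C)
    (F : L → L → C) : Prop where
  symm : ∀ s t, F s t = F t s
  eq_greedyRow : ∀ s, ∀ t ≤ s, F s t = greedyRow M e req s F t

variable {M : L → L → Set C} {e : C → L → L → C} {req : L → L × L × C}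

open Classical in
theorem greedyRow_eq_ite {F : L → L → C} {s x y : L} {c : C} (hreq : req s = (x, y, c)) (t : L) :
    greedyRow M e req s F t =
      if IsPending M F s x y c ∧ (t = x ∨ t = y) then c else e c s t := by
  rw [greedyRow, hreq]

theorem exists_isGreedy [WellFoundedLT L] [Nonempty C] (M : L → L → Set C) (e : C → L → L → C)
    (req : L → L × L × C) : ∃ F, IsGreedy M e req F := by
  classical
  obtain ⟨F, hsymm, hrow⟩ := exists_symm_eq_of_local (greedyRow M e req) fun s G G' hG ↦ by
    have hpending (x y : L) (c : C) : IsPending M G s x y c ↔ IsPending M G' s x y c := by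
      refine and_congr_right fun _ ↦ and_congr_right fun hx ↦ and_congr_right fun hy ↦
        and_congr_right fun _ ↦ forall₂_congr fun v hv ↦ ?_
      rw [hG v hv x hx, hG v hv y hy]
    obtain ⟨x, y, c, hreq⟩ : ∃ x y c, req s = (x, y, c) := ⟨_, _, _, rfl⟩
    funext t
    rw [greedyRow_eq_ite hreq, greedyRow_eq_ite hreq]
    exact if_congr (and_congr_left' (hpending x y c)) rfl rfl
  exact ⟨F, hsymm, hrow⟩

namespace IsGreedy

variable {F : L → L → C} {R : Set C} {s t x y : L} {c : C}

theorem apply_of_isPending (hF : IsGreedy M e req F) (hreq : req s = (x, y, c))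
    (hs : IsPending M F s x y c) : F s x = c ∧ F s y = c := by
  obtain ⟨-, hx, hy, -⟩ := id hs
  simp [hF.eq_greedyRow s x hx.le, hF.eq_greedyRow s y hy.le, greedyRow_eq_ite hreq, hs]

theorem isPending_of_apply_ne (hF : IsGreedy M e req F) (hreq : req s = (x, y, c)) (ht : t ≤ s)
    (hne : F s t ≠ e c s t) : IsPending M F s x y c ∧ (t = x ∨ t = y) ∧ F s t = c := by
  rw [hF.eq_greedyRow s t ht, greedyRow_eq_ite hreq] at hne ⊢
  split_ifs at hne ⊢ with h
  · exact ⟨h.1, h.2, rfl⟩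
  · exact absurd rfl hne

theorem eq_empty_of_apply_mem (hF : IsGreedy M e req F) (heR : ∀ c s t, e c s t ∉ insert c R)
    (ht : t ≤ s) (hR : F s t ∈ R) (z : L) : M s z = ∅ := by
  have hne : F s t ≠ e (req s).2.2 s t := fun h ↦ heR _ s t (mem_insert_of_mem _ (h ▸ hR))
  exact (hF.isPending_of_apply_ne rfl ht hne).1.1 z

theorem of_apply_eq_apply (hF : IsGreedy M e req F) (he : ∀ c s, InjOn (e c s) (Iic s))
    (hec : ∀ c s t, e c s t ≠ c) (hM : ∀ x y, M x y = M y x) (hx : x ≤ s) (hy : y ≤ s)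
    (hxy : x ≠ y) (h : F s x = F s y) :
    F s x ∉ M x y ∧ ∀ v < s, ¬(F v x = F s x ∧ F v y = F s x) := by
  obtain ⟨x', y', c, hreq⟩ : ∃ x' y' c, req s = (x', y', c) := ⟨_, _, _, rfl⟩
  have requested {t : L} (ht : t ≤ s) := hF.isPending_of_apply_ne hreq ht
  have hne : F s x ≠ e c s x := by
    intro hx'
    by_cases hy' : F s y = e c s y
    · exact hxy (he c s hx hy (hx' ▸ h.trans hy'))
    · exact hec c s x (hx' ▸ h.trans (requested hy hy').2.2)
  obtain ⟨hs, hx', hc⟩ := requested hx hne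
  have hy' := (requested hy fun h' ↦ hec c s y (h' ▸ h.symm.trans hc)).2.1
  obtain ⟨-, -, -, hcM, hv⟩ := hs
  rw [hc]
  rcases hx' with rfl | rfl <;> rcases hy' with rfl | rfl
  · exact absurd rfl hxy
  · exact ⟨hcM, hv⟩
  · exact ⟨hM x y ▸ hcM, fun v hvs h ↦ hv v hvs h.symm⟩
  · exact absurd rfl hxy

theorem noMonoK22 (hF : IsGreedy M e req F) (he : ∀ c s, InjOn (e c s) (Iic s))
    (hec : ∀ c s t, e c s t ≠ c) (hM : ∀ x y, M x y = M y x) : NoMonoK22 F :=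
  noMonoK22_of_symm hF.symm fun _ _ hx _ hy hxy h ↦ (hF.of_apply_eq_apply he hec hM hx hy hxy h).2

theorem missingColors_subset (hF : IsGreedy M e req F)
    (hreq : ∀ p s₀, ∃ s, (∀ z, M s z = ∅) ∧ s₀ < s ∧ req s = p) (x y : L) :
    missingColors F x y ⊆ M x y := by
  intro c hc
  by_contra hcM
  obtain ⟨s, hMs, hs, hreqs⟩ := hreq (x, y, c) (max x y)
  obtain ⟨hx, hy⟩ := max_lt_iff.1 hs
  have no_common (v : L) : ¬(F v x = c ∧ F v y = c) := by
    rw [hF.symm v x, hF.symm v y]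
    exact hc v
  exact no_common s (hF.apply_of_isPending hreqs ⟨hMs, hx, hy, hcM, fun v _ ↦ no_common v⟩)

theorem subset_missingColors (hF : IsGreedy M e req F) (he : ∀ c s, InjOn (e c s) (Iic s))
    (heR : ∀ c s t, e c s t ∉ insert c R) (hM : ∀ x y, M x y = M y x) (hMR : ∀ x y, M x y ⊆ R)
    (hxy : x ≠ y) : M x y ⊆ missingColors F x y := by
  rintro c hc v ⟨hxv, hyv⟩
  have hcR : c ∈ R := hMR x y hc
  have hx : x < v := by
    by_contra! hle
    exact notMem_empty c (hF.eq_empty_of_apply_mem heR hle (hxv ▸ hcR) y ▸ hc)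
  have hy : y < v := by
    by_contra! hle
    exact notMem_empty c (hF.eq_empty_of_apply_mem heR hle (hyv ▸ hcR) x ▸ hM x y ▸ hc)
  rw [hF.symm] at hxv hyv
  have hec (c : C) (s t : L) : e c s t ≠ c := fun h ↦ heR c s t (.inl h)
  exact (hF.of_apply_eq_apply he hec hM hx.le hy.le hxy (hxv.trans hyv.symm)).1 (hxv ▸ hc)

end IsGreedy

end Greedy

section Existence

variable {α β : Type u}

theorem exists_injOn_forall_mem {s : Set α} {t : Set β} (ht : t.Nonempty) (h : #s ≤ #t) :
    ∃ f : α → β, InjOn f s ∧ ∀ a, f a ∈ t := by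
  have := ht.to_subtype
  obtain ⟨g⟩ := h
  obtain ⟨f, hf⟩ := exists_injOn_iff_injective.2 ⟨g, g.injective⟩
  exact ⟨fun a ↦ f a, Subtype.val_injective.comp_injOn hf, fun a ↦ (f a).2⟩

theorem exists_lt_apply_of_injective [LinearOrder α] (hα : ∀ s : α, #(Iic s) < #α) {f : α → α}
    (hf : Injective f) (s : α) : ∃ i, s < f i := by
  by_contra! h
  exact (mk_le_of_injective (hf.codRestrict (s := Iic s) h)).not_gt (hα s)

theorem exists_frequently_eq [LinearOrder α] [Infinite α] (hα : ∀ s : α, #(Iic s) < #α)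
    {Z : Set α} (hZ : #Z = #α) [Nonempty β] (hβ : #β ≤ #α) :
    ∃ f : α → β, ∀ b s₀, ∃ s ∈ Z, s₀ < s ∧ f s = b := by
  have hcard : #Z = #(α × β) := by
    rw [hZ, ← mul_def, mul_eq_left (aleph0_le_mk α) hβ (mk_ne_zero β)]
  obtain ⟨φ⟩ := Cardinal.eq.1 hcard
  refine ⟨extend Subtype.val (fun z ↦ (φ z).2) fun _ ↦ Classical.arbitrary β, fun b s₀ ↦ ?_⟩
  have hinj : Injective fun a ↦ (φ.symm (a, b) : α) := fun a a' h ↦ by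
    simpa using φ.symm.injective (Subtype.ext h)
  obtain ⟨a, ha⟩ := exists_lt_apply_of_injective hα hinj s₀
  exact ⟨_, (φ.symm (a, b)).2, ha, by simp⟩

theorem exists_symm_noMonoK22_missingColors_eq {L C : Type u} [LinearOrder L] [WellFoundedLT L]
    [Infinite L] [Infinite C] (hL : ∀ s : L, #(Iic s) < #L) (hLC : ∀ s : L, #(Iic s) ≤ #C)
    (hCL : #C ≤ #L) {R : Set C} (hR : R.Finite) {M : L → L → Set C} (hM : ∀ x y, M x y = M y x)
    (hMR : ∀ x y, M x y ⊆ R) (hZ : #{x | ∀ y, M x y = ∅} = #L) :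
    ∃ F : L → L → C, (∀ s t, F s t = F t s) ∧ NoMonoK22 F ∧
      ∀ x y, x ≠ y → missingColors F x y = M x y := by
  have filler (c : C) (s : L) :
      ∃ f : L → C, InjOn f (Iic s) ∧ ∀ t, f t ∈ (insert c R : Set C)ᶜ := by
    have hfin : (insert c R : Set C).Finite := hR.insert c
    refine exists_injOn_forall_mem hfin.infinite_compl.nonempty ?_
    rw [mk_compl_of_infinite _ (hfin.lt_aleph0.trans_le (aleph0_le_mk C))]
    exact hLC s
  choose e he heR using filler
  have hP : #(L × L × C) ≤ #L := by
    rw [← mul_def, ← mul_def, mul_eq_left (aleph0_le_mk L) hCL (mk_ne_zero C),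
      mul_eq_self (aleph0_le_mk L)]
  obtain ⟨req, hreq⟩ := exists_frequently_eq hL hZ hP
  obtain ⟨F, hF⟩ := exists_isGreedy M e req
  have hec (c : C) (s t : L) : e c s t ≠ c := fun h ↦ heR c s t (.inl h)
  exact ⟨F, hF.symm, hF.noMonoK22 he hec hM, fun x y hxy ↦
    (hF.missingColors_subset hreq x y).antisymm (hF.subset_missingColors he heR hM hMR hxy)⟩

theorem bInextensible_of_pairwise_missingColors_eq_empty {A C : Type u} {B : Type*}
    {F : A → B → C} {S : Set A} (hS : #C < #S) (hF : S.Pairwise fun x y ↦ missingColors F x y = ∅) :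
    BInextensible F := by
  intro g
  have hg : ¬ Injective (S.domRestrict g) := fun h ↦ (mk_le_of_injective h).not_gt hS
  obtain ⟨⟨x, hx⟩, ⟨y, hy⟩, hgxy : g x = g y, hne⟩ := not_injective_iff.1 hg
  have hxy : x ≠ y := fun h ↦ hne (Subtype.ext h)
  have hgx : g x ∉ missingColors F x y := hF hx hy hxy ▸ notMem_empty _
  simp only [missingColors, mem_ofPred_eq, not_forall, not_not] at hgx
  obtain ⟨b, hxb, hyb⟩ := hgx
  exact ⟨x, y, hxy, b, hxb.trans hyb.symm, hyb, hgxy⟩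

theorem exists_maximal_ncard_missingColors_eq {A C : Type u} [Infinite C]
    (hAC : #A = Order.succ #C) {w : A → A → ℕ} {n : ℕ} (hw : ∀ x y, w x y = w y x)
    (hwn : ∀ x y, w x y ≤ n) (hZ : #{x | ∀ y, w x y = 0} = #A) :
    ∃ F : A → A → C, (NoMonoK22 F ∧ AInextensible F ∧ BInextensible F) ∧
      ∀ x y, x ≠ y → (missingColors F x y).ncard = w x y := by
  have hCA : #C < #A := hAC ▸ Order.lt_succ #C
  have : Infinite A := infinite_iff.2 ((aleph0_le_mk C).trans hCA.le)
  obtain ⟨_, _, hord⟩ := exists_ord_eq_type_lt A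
  have hA (s : A) : #(Iic s) < #A := mk_Iic_lt s hord (aleph0_le_mk A)
  let color : ℕ ↪ C := Infinite.natEmbedding C
  let M (x y : A) : Set C := color '' Iio (w x y)
  have hM₀ (x y : A) : M x y = ∅ ↔ w x y = 0 := by
    rw [image_eq_empty, ← bot_eq_zero, Iio_eq_empty_iff, isMin_iff_eq_bot]
  obtain ⟨F, hsymm, hK, hF⟩ := exists_symm_noMonoK22_missingColors_eq hA
    (fun s ↦ Order.lt_succ_iff.1 (hAC ▸ hA s)) hCA.le ((finite_Iio (n + 1)).image color)
    (fun x y ↦ by simp only [hw x y])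
    (fun x y ↦ image_mono (Iio_subset_Iio ((hwn x y).trans n.le_succ)))
    (by simpa only [M, hM₀] using hZ)
  have hB : BInextensible F := by
    refine bInextensible_of_pairwise_missingColors_eq_empty (hZ ▸ hCA) fun x hx y _ hxy ↦ ?_
    exact (hF x y hxy).trans ((hM₀ x y).2 (hx y))
  refine ⟨F, ⟨hK, hB.aInextensible_of_symm hsymm, hB⟩, fun x y hxy ↦ ?_⟩
  rw [hF x y hxy, ncard_image_of_injective _ color.injective, ncard_Iio_nat]

end Existence

section Coding

variable {L Q : Type*} [LinearOrder L]

open Classical in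
/-- A symmetric weight coding the order of `L` and the subset `X`. Each `a : L` has two copies, so
that the symmetric weight between copies of different kinds can tell `a < b` from `b < a`. The
vertices in `Q` have weight zero. -/
noncomputable def codeWeight (X : Set L) : L ⊕ L ⊕ Q → L ⊕ L ⊕ Q → ℕ
  | .inl _, .inl _ => 1
  | .inl a, .inr (.inl b) | .inr (.inl b), .inl a =>
    if a < b then 2 else if a = b then if a ∈ X then 3 else 4 else 0
  | _, _ => 0

theorem codeWeight_comm (X : Set L) (v v' : L ⊕ L ⊕ Q) :
    codeWeight X v v' = codeWeight X v' v := by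
  rcases v with _ | _ | _ <;> rcases v' with _ | _ | _ <;> rfl

theorem codeWeight_le (X : Set L) (v v' : L ⊕ L ⊕ Q) : codeWeight X v v' ≤ 4 := by
  unfold codeWeight
  split <;> (try split_ifs) <;> omega

theorem exists_eq_inl_of_codeWeight_eq_one {X : Set L} {v v' : L ⊕ L ⊕ Q}
    (h : codeWeight X v v' = 1) : ∃ a, v = .inl a := by
  rcases v with a | b | q
  · exact ⟨a, rfl⟩
  all_goals rcases v' with a' | b' | q' <;> simp only [codeWeight] at h <;> grind

theorem codeWeight_inl_inr_inl_eq_two_iff {X : Set L} {a b : L} :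
    codeWeight (Q := Q) X (.inl a) (.inr (.inl b)) = 2 ↔ a < b := by
  simp only [codeWeight]
  grind

theorem eq_of_codeWeight_eq_codeWeight_self {X Y : Set L} {a b : L} {v : L ⊕ L ⊕ Q}
    (h : codeWeight Y (.inl b) v = codeWeight (Q := Q) X (.inl a) (.inr (.inl a))) :
    v = .inr (.inl b) ∧ (a ∈ X ↔ b ∈ Y) := by
  rcases v with a' | b' | q <;> simp only [codeWeight] at h <;> grind

section Isomorphism

variable [Nontrivial L] {X Y : Set L} {σ : L ⊕ L ⊕ Q ≃ L ⊕ L ⊕ Q}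

theorem exists_apply_inl_eq_of_codeWeight_apply
    (hσ : ∀ v v', v ≠ v' → codeWeight Y (σ v) (σ v') = codeWeight X v v') (a : L) :
    ∃ a', σ (.inl a) = .inl a' := by
  obtain ⟨b, hb⟩ := exists_ne a
  have h : codeWeight Y (σ (.inl a)) (σ (.inl b)) = 1 := hσ _ _ (by simpa using hb.symm)
  exact exists_eq_inl_of_codeWeight_eq_one h

theorem eq_of_codeWeight_apply_equiv [WellFoundedLT L]
    (hσ : ∀ v v', v ≠ v' → codeWeight Y (σ v) (σ v') = codeWeight X v v') : X = Y := by
  choose π hπ using exists_apply_inl_eq_of_codeWeight_apply hσ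
  have hσ' (v v' : L ⊕ L ⊕ Q) (h : v ≠ v') :
      codeWeight X (σ.symm v) (σ.symm v') = codeWeight Y v v' := by
    simpa using (hσ _ _ (σ.symm.injective.ne h)).symm
  have hsurj : Surjective π := fun a ↦ by
    obtain ⟨a', ha'⟩ := exists_apply_inl_eq_of_codeWeight_apply hσ' a
    exact ⟨a', Sum.inl_injective (by rw [← hπ, ← ha', σ.apply_symm_apply])⟩
  have hcopy (a : L) : σ (.inr (.inl a)) = .inr (.inl (π a)) ∧ (a ∈ X ↔ π a ∈ Y) := by
    have h := hσ (.inl a) (.inr (.inl a)) Sum.inl_ne_inr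
    rw [hπ] at h
    exact eq_of_codeWeight_eq_codeWeight_self h
  have hmono : StrictMono π := fun a b hab ↦ by
    have h := hσ (.inl a) (.inr (.inl b)) Sum.inl_ne_inr
    rw [hπ, (hcopy b).1, codeWeight_inl_inr_inl_eq_two_iff.2 hab] at h
    exact codeWeight_inl_inr_inl_eq_two_iff.1 h
  have hid (a : L) : π a = a :=
    DFunLike.congr_fun (Subsingleton.elim (hmono.orderIsoOfSurjective π hsurj) (.refl L)) a
  ext a
  rw [(hcopy a).2, hid]

end Isomorphism

end Coding

theorem stmt18 (κ : Cardinal.{u}) (hκ : Cardinal.aleph0 ≤ κ) :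
    ∃ (A B C I : Type u) (F : I → A → B → C),
      Cardinal.mk A = Order.succ κ ∧ Cardinal.mk B = Order.succ κ ∧
      Cardinal.mk C = κ ∧
      Cardinal.mk I = 2 ^ Order.succ κ ∧
      (∀ i, NoMonoK22 (F i) ∧ AInextensible (F i) ∧ BInextensible (F i)) ∧
      (∀ i j, i ≠ j →
        ¬ ∃ (σ : A ≃ A) (τ : B ≃ B) (ρ : C ≃ C),
            ∀ (a : A) (b : B), ρ (F i a b) = F j (σ a) (τ b)) := by
  let L : Type u := (Order.succ κ).ord.ToType
  let A : Type u := L ⊕ L ⊕ L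
  have hκ' : ℵ₀ ≤ Order.succ κ := hκ.trans (Order.le_succ κ)
  have hL : #L = Order.succ κ := mk_ord_toType _
  have hA : #A = Order.succ κ := by simp [A, hL, add_eq_self hκ']
  have : Infinite L := infinite_iff.2 (hL ▸ hκ')
  have : Infinite κ.out := infinite_iff.2 (κ.mk_out.symm ▸ hκ)
  have hZ (X : Set L) : #{v : A | ∀ v', codeWeight X v v' = 0} = #A := by
    refine (mk_set_le _).antisymm (hA.trans_le (hL.symm.trans_le ?_))
    have hQ (q : L) (v : A) : codeWeight X (.inr (.inr q)) v = 0 := rfl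
    exact mk_le_of_injective ((Sum.inr_injective.comp Sum.inr_injective).codRestrict
      (s := {v : A | ∀ v', codeWeight X v v' = 0}) hQ)
  choose F hF hw using fun X : Set L ↦ exists_maximal_ncard_missingColors_eq
    (C := κ.out) (by rw [hA, mk_out]) (codeWeight_comm X) (codeWeight_le X) (hZ X)
  refine ⟨A, A, κ.out, Set L, F, hA, hA, mk_out κ, by rw [mk_set, hL], hF, ?_⟩
  rintro X Y hXY ⟨σ, τ, ρ, h⟩
  refine hXY (eq_of_codeWeight_apply_equiv (σ := σ) fun v v' hv ↦ ?_)
  rw [← hw Y _ _ (σ.injective.ne hv), ← hw X _ _ hv, missingColors_equiv_apply h,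
    ncard_image_of_injective _ ρ.injective]
end
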